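/- arXiv:2001.01607 — 2 statements merged into one kernel-verified Lean document; each statement's English description precedes it below -/
import Mathlib

section
/- If G is a (theta, triangle, cube)-free graph, then G belongs to the class 𝒞, i.e., G is (theta, prism, pyramid, butterfly)-free and every 2-wheel in G with non-adjacent centers is either a nested wheel or a cousin wheel. -/
open SimpleGraph

variable {V : Type} [Fintype V] [DecidableEq V]

/-- `p` is a chordless (induced) path in `G`: a path such that the only edges of `G`
between its vertices are the edges of the path. -/
def IsInducedPathW (G : SimpleGraph V) {a b : V} (p : G.Walk a b) : Prop :=
  p.IsPath ∧ ∀ u v : V, u ∈ p.support → v ∈ p.support → G.Adj u v → p.toSubgraph.Adj u v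

/-- A hole of length `n` in `G`: an induced (chordless) cycle of length `n ≥ 4`,
given by an injection of `ZMod n` into `G` whose adjacencies are exactly the consecutive ones. -/
def IsHoleEmb (G : SimpleGraph V) (n : ℕ) (f : ZMod n → V) : Prop :=
  4 ≤ n ∧ Function.Injective f ∧
    ∀ i j : ZMod n, G.Adj (f i) (f j) ↔ (j = i + 1 ∨ i = j + 1)

/-- `G` contains an even hole (induced even cycle of length at least 4). -/
def ContainsEvenHole (G : SimpleGraph V) : Prop :=
  ∃ (n : ℕ) (f : ZMod n → V), IsHoleEmb G n f ∧ Even n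

/-- `G` contains a square (hole of length 4). -/
def ContainsSquare (G : SimpleGraph V) : Prop :=
  ∃ f : ZMod 4 → V, IsHoleEmb G 4 f

/-- `G` contains a theta as an induced subgraph: three internally vertex-disjoint chordless
paths from `a` to `b`, each of length at least 2, with no edges between the paths other than
those incident to `a` or `b` specified by the paths. -/
def ContainsTheta (G : SimpleGraph V) : Prop :=
  ∃ (a b : V) (p₁ p₂ p₃ : G.Walk a b),
    (IsInducedPathW G p₁ ∧ IsInducedPathW G p₂ ∧ IsInducedPathW G p₃) ∧
    (2 ≤ p₁.length ∧ 2 ≤ p₂.length ∧ 2 ≤ p₃.length) ∧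
    (∀ w : V, ((w ∈ p₁.support ∧ w ∈ p₂.support) ∨ (w ∈ p₁.support ∧ w ∈ p₃.support) ∨
          (w ∈ p₂.support ∧ w ∈ p₃.support)) → (w = a ∨ w = b)) ∧
    (∀ u w : V, u ≠ a → u ≠ b → w ≠ a → w ≠ b →
      ((u ∈ p₁.support ∧ w ∈ p₂.support) ∨ (u ∈ p₁.support ∧ w ∈ p₃.support) ∨
       (u ∈ p₂.support ∧ w ∈ p₃.support)) → ¬G.Adj u w)

/-- `G` contains a prism as an induced subgraph. -/
def ContainsPrism (G : SimpleGraph V) : Prop :=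
  ∃ (a₁ b₁ a₂ b₂ a₃ b₃ : V) (p₁ : G.Walk a₁ b₁) (p₂ : G.Walk a₂ b₂) (p₃ : G.Walk a₃ b₃),
    (IsInducedPathW G p₁ ∧ IsInducedPathW G p₂ ∧ IsInducedPathW G p₃) ∧
    (1 ≤ p₁.length ∧ 1 ≤ p₂.length ∧ 1 ≤ p₃.length) ∧
    (G.Adj a₁ a₂ ∧ G.Adj a₂ a₃ ∧ G.Adj a₁ a₃) ∧
    (G.Adj b₁ b₂ ∧ G.Adj b₂ b₃ ∧ G.Adj b₁ b₃) ∧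
    (∀ w : V, ¬(w ∈ p₁.support ∧ w ∈ p₂.support) ∧ ¬(w ∈ p₁.support ∧ w ∈ p₃.support) ∧
          ¬(w ∈ p₂.support ∧ w ∈ p₃.support)) ∧
    (∀ u w : V, u ∈ p₁.support → w ∈ p₂.support → G.Adj u w →
      (u = a₁ ∧ w = a₂) ∨ (u = b₁ ∧ w = b₂)) ∧
    (∀ u w : V, u ∈ p₁.support → w ∈ p₃.support → G.Adj u w →
      (u = a₁ ∧ w = a₃) ∨ (u = b₁ ∧ w = b₃)) ∧
    (∀ u w : V, u ∈ p₂.support → w ∈ p₃.support → G.Adj u w →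
      (u = a₂ ∧ w = a₃) ∨ (u = b₂ ∧ w = b₃))

/-- `G` contains a pyramid as an induced subgraph. -/
def ContainsPyramid (G : SimpleGraph V) : Prop :=
  ∃ (a b₁ b₂ b₃ : V) (p₁ : G.Walk a b₁) (p₂ : G.Walk a b₂) (p₃ : G.Walk a b₃),
    (IsInducedPathW G p₁ ∧ IsInducedPathW G p₂ ∧ IsInducedPathW G p₃) ∧
    (1 ≤ p₁.length ∧ 1 ≤ p₂.length ∧ 1 ≤ p₃.length) ∧
    ((2 ≤ p₁.length ∧ 2 ≤ p₂.length) ∨ (2 ≤ p₁.length ∧ 2 ≤ p₃.length) ∨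
     (2 ≤ p₂.length ∧ 2 ≤ p₃.length)) ∧
    (G.Adj b₁ b₂ ∧ G.Adj b₂ b₃ ∧ G.Adj b₁ b₃) ∧
    (∀ w : V, ((w ∈ p₁.support ∧ w ∈ p₂.support) ∨ (w ∈ p₁.support ∧ w ∈ p₃.support) ∨
          (w ∈ p₂.support ∧ w ∈ p₃.support)) → w = a) ∧
    (∀ u w : V, u ∈ p₁.support → w ∈ p₂.support → u ≠ a → w ≠ a → G.Adj u w →
      u = b₁ ∧ w = b₂) ∧
    (∀ u w : V, u ∈ p₁.support → w ∈ p₃.support → u ≠ a → w ≠ a → G.Adj u w →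
      u = b₁ ∧ w = b₃) ∧
    (∀ u w : V, u ∈ p₂.support → w ∈ p₃.support → u ≠ a → w ≠ a → G.Adj u w →
      u = b₂ ∧ w = b₃)

/-- `G` contains the cube as an induced subgraph: a hole of length 6 together with
two non-adjacent vertices `u, v` outside it, `u` adjacent to the even positions and
`v` adjacent to the odd positions. -/
def ContainsCube (G : SimpleGraph V) : Prop :=
  ∃ (f : ZMod 6 → V) (u v : V), IsHoleEmb G 6 f ∧
    u ∉ Set.range f ∧ v ∉ Set.range f ∧ ¬G.Adj u v ∧
    (∀ m : ZMod 6, G.Adj u (f m) ↔ (m = 0 ∨ m = 2 ∨ m = 4)) ∧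
    (∀ m : ZMod 6, G.Adj v (f m) ↔ (m = 1 ∨ m = 3 ∨ m = 5))

/-- `G` contains an even wheel: a hole plus a vertex outside it having at least 3 and
an even number of neighbors on the hole. -/
def ContainsEvenWheel (G : SimpleGraph V) : Prop :=
  ∃ (n : ℕ) (f : ZMod n → V) (u : V), IsHoleEmb G n f ∧ u ∉ Set.range f ∧
    3 ≤ {m : ZMod n | G.Adj u (f m)}.ncard ∧ Even {m : ZMod n | G.Adj u (f m)}.ncard

/-- `G` contains a butterfly: a wheel `(H,v)` with `N_H(v) = {a,b,c,d}`,
`ab, cd ∈ E(G)` and `bc, da ∉ E(G)`. -/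
def ContainsButterfly (G : SimpleGraph V) : Prop :=
  ∃ (n : ℕ) (f : ZMod n → V) (u : V), IsHoleEmb G n f ∧ u ∉ Set.range f ∧
    ∃ i j : ZMod n, i ≠ j ∧ i ≠ j + 1 ∧ i + 1 ≠ j ∧ i + 1 ≠ j + 1 ∧
      ¬G.Adj (f (i + 1)) (f j) ∧ ¬G.Adj (f (j + 1)) (f i) ∧
      (∀ m : ZMod n, G.Adj u (f m) ↔ (m = i ∨ m = i + 1 ∨ m = j ∨ m = j + 1))

/-- A 2-wheel in `G`: a hole `f` together with two distinct centers `u, v` outside the hole,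
each having at least three neighbors on the hole. -/
def Is2WheelCfg (G : SimpleGraph V) (n : ℕ) (f : ZMod n → V) (u v : V) : Prop :=
  IsHoleEmb G n f ∧ u ≠ v ∧ u ∉ Set.range f ∧ v ∉ Set.range f ∧
  3 ≤ {m : ZMod n | G.Adj u (f m)}.ncard ∧ 3 ≤ {m : ZMod n | G.Adj v (f m)}.ncard

/-- The 2-wheel `(f, {u,v})` is nested: the hole splits at `f i` and `f (i+d)` into two arcs,
with all neighbors of `u` on one arc and all neighbors of `v` on the other. -/
def NestedCfg (G : SimpleGraph V) (n : ℕ) (f : ZMod n → V) (u v : V) : Prop :=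
  ∃ (i : ZMod n) (d : ℕ), 1 ≤ d ∧ d < n ∧
    (∀ m : ZMod n, G.Adj u (f m) → ∃ e : ℕ, e ≤ d ∧ m = i + (e : ZMod n)) ∧
    (∀ m : ZMod n, G.Adj v (f m) → ∃ e : ℕ, e ≤ n - d ∧ m = i + (d : ZMod n) + (e : ZMod n))

/-- The 2-wheel `(f, {u,v})` is the cube. -/
def CubeCfg (G : SimpleGraph V) (n : ℕ) (f : ZMod n → V) (u v : V) : Prop :=
  n = 6 ∧ ∃ i : ZMod n,
    (∀ m : ZMod n, G.Adj u (f m) ↔ (m = i ∨ m = i + 2 ∨ m = i + 4)) ∧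
    (∀ m : ZMod n, G.Adj v (f m) ↔ (m = i + 1 ∨ m = i + 3 ∨ m = i + 5))

/-- The 2-wheel `(f, {u,v})` is a cousin wheel: `N_H(u) = {h₁,h₂,h₃}` and
`N_H(v) = {h₂,h₃,h₄}` for four consecutive vertices of the hole (or with `u, v` swapped). -/
def CousinCfg (G : SimpleGraph V) (n : ℕ) (f : ZMod n → V) (u v : V) : Prop :=
  (∃ i : ZMod n,
    (∀ m : ZMod n, G.Adj u (f m) ↔ (m = i ∨ m = i + 1 ∨ m = i + 2)) ∧
    (∀ m : ZMod n, G.Adj v (f m) ↔ (m = i + 1 ∨ m = i + 2 ∨ m = i + 3))) ∨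
  (∃ i : ZMod n,
    (∀ m : ZMod n, G.Adj v (f m) ↔ (m = i ∨ m = i + 1 ∨ m = i + 2)) ∧
    (∀ m : ZMod n, G.Adj u (f m) ↔ (m = i + 1 ∨ m = i + 2 ∨ m = i + 3)))

/-- A `u`-sector of the hole `f`: a subpath from `f i` to `f (i+d)` (`1 ≤ d < n`)
whose two ends are adjacent to `u` and whose internal vertices are not. -/
def IsSector (G : SimpleGraph V) (n : ℕ) (f : ZMod n → V) (u : V) (i : ZMod n) (d : ℕ) : Prop :=
  1 ≤ d ∧ d < n ∧ G.Adj u (f i) ∧ G.Adj u (f (i + (d : ZMod n))) ∧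
    ∀ m : ℕ, 0 < m → m < d → ¬G.Adj u (f (i + (m : ZMod n)))

/-- The class 𝒞: (theta, prism, pyramid, butterfly)-free graphs in which every 2-wheel
with non-adjacent centers is a nested wheel or a cousin wheel. -/
def InClassC (G : SimpleGraph V) : Prop :=
  ¬ContainsTheta G ∧ ¬ContainsPrism G ∧ ¬ContainsPyramid G ∧ ¬ContainsButterfly G ∧
  ∀ (n : ℕ) (f : ZMod n → V) (u v : V), Is2WheelCfg G n f u v → ¬G.Adj u v →
    (NestedCfg G n f u v ∨ CousinCfg G n f u v)

/-- `G` contains `S_{k,k,k}` as an induced subgraph: a root `r` and three legs of `k` edges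
each, with no other adjacencies among these vertices. -/
def ContainsSpider (G : SimpleGraph V) (k : ℕ) : Prop :=
  ∃ (r : V) (f : Fin 3 → Fin k → V),
    (∀ (j : Fin 3) (m : Fin k), f j m ≠ r) ∧
    (∀ (j₁ : Fin 3) (m₁ : Fin k) (j₂ : Fin 3) (m₂ : Fin k),
      f j₁ m₁ = f j₂ m₂ → j₁ = j₂ ∧ m₁ = m₂) ∧
    (∀ (j : Fin 3) (m : Fin k), G.Adj r (f j m) ↔ (m : ℕ) = 0) ∧
    (∀ (j₁ : Fin 3) (m₁ : Fin k) (j₂ : Fin 3) (m₂ : Fin k),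
      G.Adj (f j₁ m₁) (f j₂ m₂) ↔
        (j₁ = j₂ ∧ ((m₁ : ℕ) + 1 = (m₂ : ℕ) ∨ (m₂ : ℕ) + 1 = (m₁ : ℕ))))

/-- A `k`-span-wheel in `G`: a hole `f` of length `n`, with `x = f 0` and `y = f p`
non-adjacent, the two paths `P_A = f 0, f 1, …, f p` and `P_B = f 0, f (n-1), …, f p`,
and centers `c 0, …, c (k-1)` outside the hole such that `{c i} ∪ {x,y}` is independent,
every center has at least three neighbors on the hole and neighbors in the interiors of
both `P_A` and `P_B`, and the neighbors of the centers appear along both `P_A` and `P_B`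
(from `x` to `y`) in the order of the centers. -/
def IsSpanWheel (G : SimpleGraph V) (k n p : ℕ) (f : ZMod n → V) (c : Fin k → V) : Prop :=
  IsHoleEmb G n f ∧
  2 ≤ p ∧ p ≤ n - 2 ∧
  ¬G.Adj (f 0) (f (p : ZMod n)) ∧
  Function.Injective c ∧
  (∀ i : Fin k, c i ∉ Set.range f) ∧
  (∀ i j : Fin k, i ≠ j → ¬G.Adj (c i) (c j)) ∧
  (∀ i : Fin k, ¬G.Adj (c i) (f 0)) ∧
  (∀ i : Fin k, ¬G.Adj (c i) (f (p : ZMod n))) ∧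
  (∀ i : Fin k, 3 ≤ {m : ZMod n | G.Adj (c i) (f m)}.ncard) ∧
  (∀ i : Fin k, ∃ a : ℕ, 0 < a ∧ a < p ∧ G.Adj (c i) (f (a : ZMod n))) ∧
  (∀ i : Fin k, ∃ b : ℕ, p < b ∧ b < n ∧ G.Adj (c i) (f (b : ZMod n))) ∧
  (∀ i j : Fin k, i < j → ∀ a₁ a₂ : ℕ, a₁ ≤ p → a₂ ≤ p →
    G.Adj (c i) (f (a₁ : ZMod n)) → G.Adj (c j) (f (a₂ : ZMod n)) → a₁ ≤ a₂) ∧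
  (∀ i j : Fin k, i < j → ∀ b₁ b₂ : ℕ, p ≤ b₁ → b₁ ≤ n → p ≤ b₂ → b₂ ≤ n →
    G.Adj (c i) (f (b₁ : ZMod n)) → G.Adj (c j) (f (b₂ : ZMod n)) → b₂ ≤ b₁)

/-- `X` separates `s` from `t` in `G`: neither is in `X` and every walk from `s` to `t`
meets `X`. -/
def Separates (G : SimpleGraph V) (X : Set V) (s t : V) : Prop :=
  s ∉ X ∧ t ∉ X ∧ ∀ p : G.Walk s t, ∃ w ∈ p.support, w ∈ X

/-- `X` is a minimal separator of `G`: for some pair `s, t` it is an inclusion-wise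
minimal `st`-separator. -/
def MinSeparator (G : SimpleGraph V) (X : Set V) : Prop :=
  ∃ s t : V, Separates G X s t ∧ ∀ Y ⊆ X, Separates G Y s t → Y = X

/-- `A` is a connected component of `G ∖ C` that is full to `C`. -/
def IsFullComponent (G : SimpleGraph V) (C A : Set V) : Prop :=
  A.Nonempty ∧ Disjoint A C ∧ (G.induce A).Connected ∧
  (∀ a ∈ A, ∀ w : V, G.Adj a w → w ∈ A ∪ C) ∧
  (∀ x ∈ C, ∃ a ∈ A, G.Adj x a)

/-- A tree decomposition of `G` with tree `T` and bags `B`. -/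
def IsTreeDecomp (G : SimpleGraph V) {ι : Type} (T : SimpleGraph ι) (B : ι → Finset V) : Prop :=
  T.IsTree ∧
  (∀ v : V, ∃ i, v ∈ B i) ∧
  (∀ u v : V, G.Adj u v → ∃ i, u ∈ B i ∧ v ∈ B i) ∧
  (∀ (v : V) (i j : ι), v ∈ B i → v ∈ B j →
    ∀ (p : T.Walk i j), p.IsPath → ∀ x ∈ p.support, v ∈ B x)

/-- The treewidth of a finite graph: the least `w` such that `G` has a tree decomposition
all of whose bags have size at most `w + 1`. -/
noncomputable def treewidth (G : SimpleGraph V) : ℕ :=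
  sInf {w : ℕ | ∃ (m : ℕ) (T : SimpleGraph (Fin m)) (B : Fin m → Finset V),
    IsTreeDecomp G T B ∧ ∀ i, (B i).card ≤ w + 1}

/-- A graph is chordal iff it has no hole. -/
def IsChordal (G : SimpleGraph V) : Prop :=
  ¬∃ (n : ℕ) (f : ZMod n → V), IsHoleEmb G n f

/-- `H` is obtained from `G` by a minimal fill-in (minimal chordal completion). -/
def IsMinimalChordalCompletion (G H : SimpleGraph V) : Prop :=
  G ≤ H ∧ IsChordal H ∧ ∀ H' : SimpleGraph V, G ≤ H' → H' ≤ H → IsChordal H' → H' = H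

/-- `Ω` is a potential maximal clique of `G`: a maximal clique of some minimal chordal
completion of `G`. -/
def IsPMC (G : SimpleGraph V) (Ω : Set V) : Prop :=
  ∃ H : SimpleGraph V, IsMinimalChordalCompletion G H ∧ H.IsClique Ω ∧
    ∀ Ω' : Set V, H.IsClique Ω' → Ω ⊆ Ω' → Ω' = Ω

/-- `n` satisfies the Ramsey property for `(t, k)`: every graph on `n` vertices has a
clique of size `t` or an independent set of size `k`. -/
def RamseyProp (n t k : ℕ) : Prop :=
  ∀ G : SimpleGraph (Fin n),
    (∃ S : Finset (Fin n), G.IsNClique t S) ∨ (∃ S : Finset (Fin n), Gᶜ.IsNClique k S)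

/-- The Ramsey number `R(t, k)`. -/
noncomputable def ramseyNumber (t k : ℕ) : ℕ := sInf {n : ℕ | RamseyProp n t k}

/-!
Prisms, pyramids and butterflies contain triangles, so only 2-wheels with non-adjacent centers
`u`, `v` matter. Unless three rim vertices are common neighbors, which gives a theta, some neighbor
`f z` of one center, say `v`, is not a neighbor of `u`, so it is interior to a `u`-sector
`f 0, …, f b`. If `v` has a neighbor that is neither on this sector nor next to it on the rim, then
there is a theta. If all neighbors of `v` lie on the sector, then the wheel is nested. Otherwise `v`
is adjacent to `f (-1)` or to `f (b + 1)`; further thetas show that its neighbors are exactly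
`f (-1)`, `f z` and `f (b + 1)`, and that `b = 2` and the rim has length six, which is the cube.
-/

section InducedPaths

variable {W : Type} {G : SimpleGraph W}

lemma eq_succ_of_adj_getVert_of_length_eq_dist {U : Type*} {H : SimpleGraph U} {a b : U}
    {p : H.Walk a b} (hp : p.length = H.dist a b) {i j : ℕ} (hij : i < j) (hj : j ≤ p.length)
    (hadj : H.Adj (p.getVert i) (p.getVert j)) : j = i + 1 := by
  have hshort := H.dist_le ((p.take i).append (.cons hadj (p.drop j)))
  simp only [Walk.length_append, Walk.length_cons, Walk.take_length, Walk.drop_length] at hshort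
  omega

lemma isInducedPathW_of_length_eq_dist {a b : W} {p : G.Walk a b} (hp : p.length = G.dist a b) :
    IsInducedPathW G p := by
  refine ⟨p.isPath_of_length_eq_dist hp, fun x y hx hy hxy => ?_⟩
  obtain ⟨i, rfl, hi⟩ := Walk.mem_support_iff_exists_getVert.1 hx
  obtain ⟨j, rfl, hj⟩ := Walk.mem_support_iff_exists_getVert.1 hy
  rcases lt_trichotomy i j with hij | rfl | hij
  · obtain rfl := eq_succ_of_adj_getVert_of_length_eq_dist hp hij hj hxy
    exact p.toSubgraph_adj_getVert (by omega)
  · exact absurd hxy G.irrefl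
  · obtain rfl := eq_succ_of_adj_getVert_of_length_eq_dist hp hij hi hxy.symm
    exact (p.toSubgraph_adj_getVert (by omega)).symm

lemma IsInducedPathW.map_induce {S : Set W} {a b : S} {p : (G.induce S).Walk a b}
    (hp : IsInducedPathW (G.induce S) p) :
    IsInducedPathW G (p.map (Embedding.induce S).toHom) := by
  refine ⟨hp.1.map Subtype.val_injective, fun x y hx hy hxy => ?_⟩
  obtain ⟨x', hx', rfl⟩ := List.mem_map.1 (p.support_map _ ▸ hx)
  obtain ⟨y', hy', rfl⟩ := List.mem_map.1 (p.support_map _ ▸ hy)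
  rw [Walk.toSubgraph_map]
  exact ⟨x', y', hp.2 x' y' hx' hy' hxy, rfl, rfl⟩

lemma exists_isInducedPathW_of_connected {S : Set W} (hS : (G.induce S).Connected) {a b : W}
    (ha : a ∈ S) (hb : b ∈ S) :
    ∃ p : G.Walk a b, IsInducedPathW G p ∧ ∀ w ∈ p.support, w ∈ S := by
  obtain ⟨p, hp⟩ := hS.exists_walk_length_eq_dist ⟨a, ha⟩ ⟨b, hb⟩
  refine ⟨_, (isInducedPathW_of_length_eq_dist hp).map_induce, fun w hw => ?_⟩
  obtain ⟨x, -, rfl⟩ := List.mem_map.1 (p.support_map _ ▸ hw)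
  exact x.2

end InducedPaths

section Links

variable {U : Type*} {G : SimpleGraph U} {S T : Set U} {a b d : U}

/-- `S` links `a` to `b`: it induces a connected subgraph containing a neighbor of each. A theta
will be given by three sets linking its two ends. -/
structure Links (G : SimpleGraph U) (S : Set U) (a b : U) : Prop where
  connected : (G.induce S).Connected
  exists_adj_left : ∃ s ∈ S, G.Adj a s
  exists_adj_right : ∃ s ∈ S, G.Adj b s

/-- `S` and `T` are anticomplete: disjoint, with no edge between them. -/
def Anticomplete (G : SimpleGraph U) (S T : Set U) : Prop :=
  ∀ x ∈ S, ∀ y ∈ T, x ≠ y ∧ ¬G.Adj x y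

lemma Anticomplete.symm (h : Anticomplete G S T) : Anticomplete G T S :=
  fun x hx y hy => ⟨(h y hy x hx).1.symm, fun hxy => (h y hy x hx).2 hxy.symm⟩

lemma Anticomplete.insert_right (hT : Anticomplete G S T) (hd : Anticomplete G {d} S) :
    Anticomplete G S (insert d T) := by
  rintro x hx y (rfl | hy)
  · exact hd.symm x hx y rfl
  · exact hT x hx y hy

lemma connected_induce_insert (hS : (G.induce S).Connected) {s : U} (hs : s ∈ S)
    (hds : G.Adj d s) : (G.induce (insert d S)).Connected := by
  have hd : (G.induce {d}).Preconnected := .of_subsingleton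
  simpa only [Set.singleton_union] using
    connected_induce_union hd hS.preconnected (Set.mem_singleton d) hs hds

lemma Links.insert_of_adj (h : Links G S d b) (had : G.Adj a d) : Links G (insert d S) a b := by
  obtain ⟨s, hs, hds⟩ := h.exists_adj_left
  obtain ⟨t, ht, hbt⟩ := h.exists_adj_right
  exact ⟨connected_induce_insert h.connected hs hds, ⟨d, Set.mem_insert d S, had⟩,
    ⟨t, Set.mem_insert_of_mem d ht, hbt⟩⟩

lemma links_singleton (ha : G.Adj a d) (hb : G.Adj b d) : Links G {d} a b :=
  ⟨⟨.of_subsingleton⟩, ⟨d, rfl, ha⟩, ⟨d, rfl, hb⟩⟩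

end Links

section Theta

variable {W : Type} {G : SimpleGraph W} {a b : W}

lemma Links.exists_isInducedPathW {S : Set W} (h : Links G S a b) (hne : a ≠ b)
    (hnadj : ¬G.Adj a b) :
    ∃ p : G.Walk a b, IsInducedPathW G p ∧ 2 ≤ p.length ∧
      ∀ w ∈ p.support, w ≠ a → w ≠ b → w ∈ S := by
  have hconn : (G.induce (insert a (insert b S))).Connected := by
    obtain ⟨s, hs, has⟩ := h.exists_adj_left
    obtain ⟨t, ht, hbt⟩ := h.exists_adj_right
    exact connected_induce_insert (connected_induce_insert h.connected ht hbt)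
      (Set.mem_insert_of_mem b hs) has
  obtain ⟨p, hp, hpS⟩ := exists_isInducedPathW_of_connected hconn (a := a) (b := b)
    (by simp) (by simp)
  refine ⟨p, hp, ?_, fun w hw hwa hwb => ((hpS w hw).resolve_left hwa).resolve_left hwb⟩
  have hlen₀ : p.length ≠ 0 := fun h₀ => hne (Walk.eq_of_length_eq_zero h₀)
  have hlen₁ : p.length ≠ 1 := fun h₁ => hnadj (Walk.adj_of_length_eq_one h₁)
  omega

lemma containsTheta_of_links {S₁ S₂ S₃ : Set W} (hne : a ≠ b) (hnadj : ¬G.Adj a b)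
    (h₁ : Links G S₁ a b) (h₂ : Links G S₂ a b) (h₃ : Links G S₃ a b)
    (h₁₂ : Anticomplete G S₁ S₂) (h₁₃ : Anticomplete G S₁ S₃) (h₂₃ : Anticomplete G S₂ S₃) :
    ContainsTheta G := by
  obtain ⟨p₁, hp₁, hl₁, hs₁⟩ := h₁.exists_isInducedPathW hne hnadj
  obtain ⟨p₂, hp₂, hl₂, hs₂⟩ := h₂.exists_isInducedPathW hne hnadj
  obtain ⟨p₃, hp₃, hl₃, hs₃⟩ := h₃.exists_isInducedPathW hne hnadj
  refine ⟨a, b, p₁, p₂, p₃, ⟨hp₁, hp₂, hp₃⟩, ⟨hl₁, hl₂, hl₃⟩, fun w hw => ?_,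
    fun x y hxa hxb hya hyb hxy => ?_⟩
  · by_contra! ⟨hwa, hwb⟩
    rcases hw with ⟨hw, hw'⟩ | ⟨hw, hw'⟩ | ⟨hw, hw'⟩
    · exact (h₁₂ w (hs₁ w hw hwa hwb) w (hs₂ w hw' hwa hwb)).1 rfl
    · exact (h₁₃ w (hs₁ w hw hwa hwb) w (hs₃ w hw' hwa hwb)).1 rfl
    · exact (h₂₃ w (hs₂ w hw hwa hwb) w (hs₃ w hw' hwa hwb)).1 rfl
  · rcases hxy with ⟨hx, hy⟩ | ⟨hx, hy⟩ | ⟨hx, hy⟩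
    · exact (h₁₂ x (hs₁ x hx hxa hxb) y (hs₂ y hy hya hyb)).2
    · exact (h₁₃ x (hs₁ x hx hxa hxb) y (hs₃ y hy hya hyb)).2
    · exact (h₂₃ x (hs₂ x hx hxa hxb) y (hs₃ y hy hya hyb)).2

end Theta

section TriangleFree

variable {W : Type} {G : SimpleGraph W}

lemma not_adj_of_adj_of_adj {U : Type*} {H : SimpleGraph U} (htri : H.CliqueFree 3) {a b c : U}
    (hab : H.Adj a b) (hac : H.Adj a c) : ¬H.Adj b c := fun hbc =>
  isIndepSet_neighborSet_of_triangleFree H htri a hab hac hbc.ne hbc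

lemma not_containsPrism_of_cliqueFree_three (htri : G.CliqueFree 3) : ¬ContainsPrism G := by
  rintro ⟨a₁, -, a₂, -, a₃, -, -, -, -, -, -, ⟨h₁₂, h₂₃, h₁₃⟩, -⟩
  exact not_adj_of_adj_of_adj htri h₁₂ h₁₃ h₂₃

lemma not_containsPyramid_of_cliqueFree_three (htri : G.CliqueFree 3) : ¬ContainsPyramid G := by
  rintro ⟨-, b₁, b₂, b₃, -, -, -, -, -, -, ⟨h₁₂, h₂₃, h₁₃⟩, -⟩
  exact not_adj_of_adj_of_adj htri h₁₂ h₁₃ h₂₃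

lemma not_containsButterfly_of_cliqueFree_three (htri : G.CliqueFree 3) :
    ¬ContainsButterfly G := by
  rintro ⟨n, f, u, ⟨-, -, hadj⟩, -, i, j, -, -, -, -, -, -, hu⟩
  exact not_adj_of_adj_of_adj htri ((hu i).2 (.inl rfl)) ((hu (i + 1)).2 (.inr (.inl rfl)))
    ((hadj i (i + 1)).2 (.inl rfl))

lemma containsTheta_of_three_common_neighbors (htri : G.CliqueFree 3) {a b x y z : W}
    (hne : a ≠ b) (hnadj : ¬G.Adj a b) (hax : G.Adj a x) (hay : G.Adj a y) (haz : G.Adj a z)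
    (hbx : G.Adj b x) (hby : G.Adj b y) (hbz : G.Adj b z) (hxy : x ≠ y) (hxz : x ≠ z)
    (hyz : y ≠ z) : ContainsTheta G := by
  have hanti {s t : W} (hs : G.Adj a s) (ht : G.Adj a t) (hst : s ≠ t) :
      Anticomplete G {s} {t} := by
    rintro _ rfl _ rfl
    exact ⟨hst, not_adj_of_adj_of_adj htri hs ht⟩
  exact containsTheta_of_links hne hnadj (links_singleton hax hbx) (links_singleton hay hby)
    (links_singleton haz hbz) (hanti hax hay hxy) (hanti hax haz hxz) (hanti hay haz hyz)

end TriangleFree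

lemma exists_mem_ne_ne_of_three_le_ncard {α : Type*} {s : Set α} (hs : 3 ≤ s.ncard) (x y : α) :
    ∃ z ∈ s, z ≠ x ∧ z ≠ y := by
  have hpair : ({x, y} : Set α).ncard < s.ncard := by
    have := Set.ncard_insert_le x {y}
    rw [Set.ncard_singleton] at this
    omega
  obtain ⟨z, hz, hzxy⟩ := Set.exists_mem_notMem_of_ncard_lt_ncard hpair
  exact ⟨z, hz, fun h => hzxy (.inl h), fun h => hzxy (.inr h)⟩

section ZModIntervals

variable {n : ℕ}

lemma intCast_zmod_eq_iff_of_lt {i j : ℤ} (hij : i - j < n) (hji : j - i < n) :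
    (i : ZMod n) = j ↔ i = j := by
  refine ⟨fun h => ?_, congrArg _⟩
  have hdvd := (ZMod.intCast_eq_intCast_iff_dvd_sub i j n).1 h
  have := Int.eq_zero_of_abs_lt_dvd hdvd (abs_lt.2 ⟨by omega, hji⟩)
  omega

lemma exists_intCast_zmod_eq [NeZero n] (a : ℤ) (m : ZMod n) :
    ∃ k : ℤ, a ≤ k ∧ k < a + n ∧ (k : ZMod n) = m := by
  have hlt := (m - a).val_lt
  exact ⟨a + (m - a).val, by omega, by omega, by simp⟩

lemma exists_first_pos_of_not [NeZero n] {P : ZMod n → Prop} (hP : ∃ x, P x) {m : ZMod n}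
    (hm : ¬P m) : ∃ k : ℤ, 0 < k ∧ P (m + k) ∧ ∀ i : ℤ, 0 ≤ i → i < k → ¬P (m + i) := by
  classical
  obtain ⟨x, hx⟩ := hP
  have hex : ∃ k : ℕ, P (m + k) := ⟨(x - m).val, by simpa using hx⟩
  refine ⟨Nat.find hex, ?_, by simpa using Nat.find_spec hex, fun i hi hik => ?_⟩
  · rw [Int.natCast_pos, Nat.find_pos]
    simpa using hm
  · lift i to ℕ using hi
    simpa using Nat.find_min hex (Int.ofNat_lt.1 hik)

end ZModIntervals

section Holes

variable {W : Type} {G : SimpleGraph W} {n : ℕ} {f : ZMod n → W}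

/-- The arc `f p, f (p + 1), …, f q` of a cyclic sequence. Its ends are integers rather than
residues, so that positions on a hole can be compared by linear arithmetic. -/
def arc {α : Type*} {n : ℕ} (f : ZMod n → α) (p q : ℤ) : Set α :=
  (fun k : ℤ => f k) '' Set.Icc p q

namespace IsHoleEmb

lemma neZero (h : IsHoleEmb G n f) : NeZero n := ⟨by have := h.1; omega⟩

lemma injective (h : IsHoleEmb G n f) : f.Injective := h.2.1

lemma adj_iff (h : IsHoleEmb G n f) (i j : ZMod n) :
    G.Adj (f i) (f j) ↔ j = i + 1 ∨ i = j + 1 := h.2.2 i j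

lemma comp_add_left (h : IsHoleEmb G n f) (x : ZMod n) : IsHoleEmb G n fun m => f (x + m) := by
  refine ⟨h.1, h.injective.comp (add_right_injective x), fun i j => ?_⟩
  simp only [h.adj_iff, add_assoc, add_right_inj]

lemma comp_sub_left (h : IsHoleEmb G n f) (x : ZMod n) : IsHoleEmb G n fun m => f (x - m) := by
  refine ⟨h.1, h.injective.comp (sub_right_injective (b := x)), fun i j => ?_⟩
  rw [h.adj_iff, or_comm]
  exact or_congr (by constructor <;> intro h <;> linear_combination h)
    (by constructor <;> intro h <;> linear_combination h)

lemma ne_of_lt (h : IsHoleEmb G n f) {i j : ℤ} (hij : i < j) (hji : j < i + n) :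
    f i ≠ f j := fun heq =>
  hij.ne ((intCast_zmod_eq_iff_of_lt (by omega) (by omega)).1 (h.injective heq))

lemma adj_iff_of_lt (h : IsHoleEmb G n f) {i j : ℤ} (hij : i < j) (hji : j < i + n) :
    G.Adj (f i) (f j) ↔ j = i + 1 ∨ j + 1 = i + n := by
  have hnext : (j : ZMod n) = i + 1 ↔ j = i + 1 := by
    rw [← intCast_zmod_eq_iff_of_lt (n := n) (i := j) (j := i + 1) (by omega) (by omega)]
    push_cast
    rfl
  have hprev : (i : ZMod n) = j + 1 ↔ i = j + 1 - n := by
    rw [← intCast_zmod_eq_iff_of_lt (n := n) (i := i) (j := j + 1 - n) (by omega) (by omega)]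
    simp
  rw [h.adj_iff, hnext, hprev]
  omega

lemma adj_succ (h : IsHoleEmb G n f) (i : ℤ) : G.Adj (f i) (f (i + 1 : ℤ)) :=
  (h.adj_iff _ _).2 (.inl (Int.cast_add i 1 |>.trans (by simp)))

lemma not_adj_succ (h : IsHoleEmb G n f) (htri : G.CliqueFree 3) {w : W} {i j : ℤ}
    (hij : j = i + 1) (hi : G.Adj w (f i)) : ¬G.Adj w (f j) := by
  subst hij
  exact fun hj => not_adj_of_adj_of_adj htri hi hj (h.adj_succ i)

lemma adj_iff_of_adj_of_adj_add_two_of_adj_add_four {g : ZMod 6 → W} (h : IsHoleEmb G 6 g)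
    (htri : G.CliqueFree 3) {w : W} {i : ZMod 6} (h₀ : G.Adj w (g i)) (h₂ : G.Adj w (g (i + 2)))
    (h₄ : G.Adj w (g (i + 4))) (m : ZMod 6) :
    G.Adj w (g m) ↔ m = i ∨ m = i + 2 ∨ m = i + 4 := by
  have hsucc {j : ZMod 6} (hj : G.Adj w (g j)) : ¬G.Adj w (g (j + 1)) := fun hj' =>
    not_adj_of_adj_of_adj htri hj hj' ((h.adj_iff j (j + 1)).2 (.inl rfl))
  refine ⟨fun hm => ?_, by rintro (rfl | rfl | rfl) <;> assumption⟩
  by_contra hne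
  have hpred : ∀ i m : ZMod 6, ¬(m = i ∨ m = i + 2 ∨ m = i + 4) →
      m = i + 1 ∨ m = i + 2 + 1 ∨ m = i + 4 + 1 := by decide
  rcases hpred i m hne with rfl | rfl | rfl
  exacts [hsucc h₀ hm, hsucc h₂ hm, hsucc h₄ hm]

lemma connected_arc (h : IsHoleEmb G n f) {p q : ℤ} (hpq : p ≤ q) :
    (G.induce (arc f p q)).Connected := by
  induction q, hpq using Int.leInduction with
  | base =>
    rw [arc, Set.Icc_self, Set.image_singleton]
    exact ⟨.of_subsingleton⟩
  | succ q hpq ih =>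
    have hinsert : arc f p (q + 1) = insert (f (q + 1 : ℤ)) (arc f p q) := by
      rw [arc, ← Set.insert_Icc_right_eq_Icc_add_one (by omega), Set.image_insert_eq, arc]
    rw [hinsert]
    exact connected_induce_insert ih ⟨q, ⟨hpq, le_rfl⟩, rfl⟩ (h.adj_succ q).symm

lemma links_arc (h : IsHoleEmb G n f) {p q i j : ℤ} {a b : W} (hi : i ∈ Set.Icc p q)
    (hj : j ∈ Set.Icc p q) (ha : G.Adj a (f i)) (hb : G.Adj b (f j)) :
    Links G (arc f p q) a b :=
  ⟨h.connected_arc (hi.1.trans hi.2), ⟨f i, ⟨i, hi, rfl⟩, ha⟩, ⟨f j, ⟨j, hj, rfl⟩, hb⟩⟩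

lemma anticomplete_arc (h : IsHoleEmb G n f) {p q r s : ℤ} (hqr : q + 1 < r)
    (hsp : s + 1 < p + n) : Anticomplete G (arc f p q) (arc f r s) := by
  rintro _ ⟨i, ⟨hpi, hiq⟩, rfl⟩ _ ⟨j, ⟨hrj, hjs⟩, rfl⟩
  refine ⟨h.ne_of_lt (by omega) (by omega), ?_⟩
  rw [h.adj_iff_of_lt (by omega) (by omega)]
  omega

end IsHoleEmb

lemma anticomplete_singleton_arc {w : W} (hw : w ∉ Set.range f) {p q : ℤ}
    (hadj : ∀ k : ℤ, p ≤ k → k ≤ q → ¬G.Adj w (f k)) : Anticomplete G {w} (arc f p q) := by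
  rintro _ rfl _ ⟨k, ⟨hpk, hkq⟩, rfl⟩
  exact ⟨fun heq => hw ⟨k, heq.symm⟩, hadj k hpk hkq⟩

end Holes

section Wheels

variable {W : Type} {G : SimpleGraph W} {n : ℕ} {f : ZMod n → W} {u v : W}

namespace Is2WheelCfg

lemma hole (h : Is2WheelCfg G n f u v) : IsHoleEmb G n f := h.1

lemma ne (h : Is2WheelCfg G n f u v) : u ≠ v := h.2.1

lemma notMem_left (h : Is2WheelCfg G n f u v) : u ∉ Set.range f := h.2.2.1

lemma notMem_right (h : Is2WheelCfg G n f u v) : v ∉ Set.range f := h.2.2.2.1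

lemma three_le_ncard_left (h : Is2WheelCfg G n f u v) : 3 ≤ {m | G.Adj u (f m)}.ncard :=
  h.2.2.2.2.1

lemma three_le_ncard_right (h : Is2WheelCfg G n f u v) : 3 ≤ {m | G.Adj v (f m)}.ncard :=
  h.2.2.2.2.2

lemma swap (h : Is2WheelCfg G n f u v) : Is2WheelCfg G n f v u :=
  ⟨h.hole, h.ne.symm, h.notMem_right, h.notMem_left, h.three_le_ncard_right,
    h.three_le_ncard_left⟩

lemma comp_equiv (h : Is2WheelCfg G n f u v) (σ : ZMod n ≃ ZMod n)
    (hσ : IsHoleEmb G n (f ∘ σ)) : Is2WheelCfg G n (f ∘ σ) u v := by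
  obtain ⟨-, hne, hu, hv, hu₃, hv₃⟩ := h
  have hcard (w : W) : {m | G.Adj w ((f ∘ σ) m)}.ncard = {m | G.Adj w (f m)}.ncard :=
    Set.ncard_preimage_of_injective_subset_range (s := {m | G.Adj w (f m)}) σ.injective
      (by simp [σ.surjective.range_eq])
  exact ⟨hσ, hne, by rwa [EquivLike.range_comp], by rwa [EquivLike.range_comp],
    (hcard u).symm ▸ hu₃, (hcard v).symm ▸ hv₃⟩

lemma exists_adj_of_not_adj (htheta : ¬ContainsTheta G) (htri : G.CliqueFree 3)
    (h : Is2WheelCfg G n f u v) (huv : ¬G.Adj u v) : ∃ m, G.Adj v (f m) ∧ ¬G.Adj u (f m) := by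
  by_contra! hall
  have := h.hole.neZero
  have hinj := h.hole.injective
  obtain ⟨x, y, z, hx, hy, hz, hxy, hxz, hyz⟩ :=
    (Set.two_lt_ncard_iff (Set.toFinite _)).1 h.three_le_ncard_right
  exact htheta (containsTheta_of_three_common_neighbors htri h.ne huv (hall x hx) (hall y hy)
    (hall z hz) hx hy hz (hinj.ne hxy) (hinj.ne hxz) (hinj.ne hyz))

end Is2WheelCfg

lemma nestedCfg_of_comp_add_left {x : ZMod n} (h : NestedCfg G n (fun m => f (x + m)) u v) :
    NestedCfg G n f u v := by
  obtain ⟨i, d, hd, hdn, hu, hv⟩ := h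
  refine ⟨x + i, d, hd, hdn, fun m hm => ?_, fun m hm => ?_⟩
  · obtain ⟨e, he, heq⟩ := hu (m - x) (by simpa using hm)
    exact ⟨e, he, by linear_combination heq⟩
  · obtain ⟨e, he, heq⟩ := hv (m - x) (by simpa using hm)
    exact ⟨e, he, by linear_combination heq⟩

/-- The 2-wheel `(f, {u, v})` has non-adjacent centers, and `f 0, f 1, …, f b` is a `u`-sector of
its rim. -/
structure IsSectorConfig (G : SimpleGraph W) (f : ZMod n → W) (b : ℤ) (u v : W) : Prop where
  wheel : Is2WheelCfg G n f u v
  not_adj : ¬G.Adj u v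
  pos : 0 < b
  lt : b < n
  adj_left : G.Adj u (f (0 : ℤ))
  adj_right : G.Adj u (f b)
  not_adj_inside : ∀ k : ℤ, 0 < k → k < b → ¬G.Adj u (f k)

lemma Is2WheelCfg.exists_isSectorConfig (h : Is2WheelCfg G n f u v) (huv : ¬G.Adj u v)
    {m : ZMod n} (hm : ¬G.Adj u (f m)) :
    ∃ (x : ZMod n) (b z : ℤ), 0 < z ∧ z < b ∧ x + z = m ∧
      IsSectorConfig G (fun k => f (x + k)) b u v := by
  have := h.hole.neZero
  have hex : ∃ x, G.Adj u (f x) := by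
    obtain ⟨x, hx, -⟩ := exists_mem_ne_ne_of_three_le_ncard h.three_le_ncard_left m m
    exact ⟨x, hx⟩
  obtain ⟨i, hi, hui, hbefore⟩ := exists_first_pos_of_not hex hm
  obtain ⟨j, hj, huj, hafter⟩ := exists_first_pos_of_not (P := fun x => G.Adj u (f (-x)))
    (m := -m) (by obtain ⟨x, hx⟩ := hex; exact ⟨-x, by simpa using hx⟩) (by simpa using hm)
  refine ⟨m - j, j + i, j, hj, by omega, by ring,
    h.comp_equiv (Equiv.addLeft (m - j)) (h.hole.comp_add_left _), huv, by omega, ?_,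
    by simpa [sub_eq_neg_add] using huj, by simpa [← add_assoc] using hui, fun k hk hkb hadj => ?_⟩
  · obtain ⟨y, hy, hyi, -⟩ := exists_mem_ne_ne_of_three_le_ncard h.three_le_ncard_left (m + i) m
    obtain ⟨k, hk, hkn, hky⟩ := exists_intCast_zmod_eq 0 (y - m)
    obtain rfl : y = m + k := by rw [hky]; ring
    have hik : i < k := by
      refine lt_of_le_of_ne (not_lt.1 fun hki => hbefore k hk hki hy) ?_
      rintro rfl
      exact hyi rfl
    have hjk : j ≤ n - k := not_lt.1 fun hlt => hafter (n - k) (by omega) hlt (by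
      simpa [add_comm] using hy)
    omega
  · rcases lt_or_ge k j with hkj | hjk
    · exact hafter (j - k) (by omega) (by omega)
        (by convert hadj using 2; push_cast; ring)
    · exact hbefore (k - j) (by omega) (by omega)
        (by convert hadj using 2; push_cast; ring)

end Wheels

namespace IsSectorConfig

variable {W : Type} {G : SimpleGraph W} {n : ℕ} {f : ZMod n → W} {b z : ℤ} {u v : W}

lemma hole (h : IsSectorConfig G f b u v) : IsHoleEmb G n f := h.wheel.hole

lemma reflect (h : IsSectorConfig G f b u v) :
    IsSectorConfig G (fun m : ZMod n => f (b - m)) b u v where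
  wheel := h.wheel.comp_equiv (Equiv.subLeft (b : ZMod n)) (h.hole.comp_sub_left b)
  not_adj := h.not_adj
  pos := h.pos
  lt := h.lt
  adj_left := by simpa using h.adj_right
  adj_right := by simpa using h.adj_left
  not_adj_inside k hk hkb := by
    simpa using h.not_adj_inside (b - k) (by omega) (by omega)

lemma exists_adj_far (h : IsSectorConfig G f b u v) (htri : G.CliqueFree 3) :
    ∃ t : ℤ, b + 2 ≤ t ∧ t ≤ n - 2 ∧ G.Adj u (f t) := by
  have := h.hole.neZero
  obtain ⟨m, hm, hm₀, hmb⟩ :=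
    exists_mem_ne_ne_of_three_le_ncard h.wheel.three_le_ncard_left ((0 : ℤ) : ZMod n) (b : ZMod n)
  obtain ⟨t, ht, htn, rfl⟩ := exists_intCast_zmod_eq (-1) m
  have ht₀ : t ≠ 0 := fun heq => hm₀ (by rw [heq])
  have htb : t ≠ b := fun heq => hmb (by rw [heq])
  have htpred : t ≠ -1 := by
    rintro rfl
    exact h.hole.not_adj_succ htri rfl hm h.adj_left
  have htsucc : t ≠ b + 1 := fun heq => h.hole.not_adj_succ htri heq h.adj_right hm
  have hbt : b ≤ t := not_lt.1 fun hlt => h.not_adj_inside t (by omega) hlt hm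
  exact ⟨t, by omega, by omega, hm⟩

-- The theta joins `u` to `v`, through both ends of the sector and through the rest of the rim.
lemma containsTheta_of_two_adj_of_adj_far (h : IsSectorConfig G f b u v) (htri : G.CliqueFree 3)
    {z z' w : ℤ} (hz : 0 ≤ z) (hzz' : z < z') (hz' : z' ≤ b) (hw : b + 2 ≤ w) (hwn : w ≤ n - 2)
    (hvz : G.Adj v (f z)) (hvz' : G.Adj v (f z')) (hvw : G.Adj v (f w)) : ContainsTheta G := by
  obtain ⟨t, hbt, htn, hut⟩ := h.exists_adj_far htri
  have hgap : z' ≠ z + 1 := fun heq => h.hole.not_adj_succ htri heq hvz hvz'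
  exact containsTheta_of_links h.wheel.ne h.not_adj
    (h.hole.links_arc (p := 0) (q := z) ⟨le_rfl, hz⟩ ⟨hz, le_rfl⟩ h.adj_left hvz)
    (h.hole.links_arc (p := z') (q := b) ⟨hz', le_rfl⟩ ⟨le_rfl, hz'⟩ h.adj_right hvz')
    (h.hole.links_arc (p := b + 2) (q := n - 2) ⟨hbt, htn⟩ ⟨hw, hwn⟩ hut hvw)
    (h.hole.anticomplete_arc (by omega) (by omega))
    (h.hole.anticomplete_arc (by omega) (by omega))
    (h.hole.anticomplete_arc (by omega) (by omega))

-- The theta joins `f z` to `u`, along the sector in both directions and through `v`.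
lemma containsTheta_of_unique_adj_of_adj_far (h : IsSectorConfig G f b u v)
    (htri : G.CliqueFree 3) {w : ℤ} (hz : 0 < z) (hzb : z < b) (hw : b + 2 ≤ w)
    (hwn : w ≤ n - 2) (hvz : G.Adj v (f z)) (hvw : G.Adj v (f w))
    (hunique : ∀ k : ℤ, 0 ≤ k → k ≤ b → G.Adj v (f k) → k = z) : ContainsTheta G := by
  obtain ⟨t, hbt, htn, hut⟩ := h.exists_adj_far htri
  have hanti {p q : ℤ} (hp : 0 ≤ p) (hq : q ≤ b) (hz : z < p ∨ q < z) :
      Anticomplete G {v} (arc f p q) :=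
    anticomplete_singleton_arc h.wheel.notMem_right fun k hpk hkq hvk => by
      have := hunique k (by omega) (by omega) hvk
      omega
  have hpred : G.Adj (f z) (f (z - 1 : ℤ)) := by simpa using (h.hole.adj_succ (z - 1)).symm
  exact containsTheta_of_links (fun heq => h.wheel.notMem_left ⟨z, heq⟩)
    (fun hadj => h.not_adj_inside z hz hzb hadj.symm)
    (h.hole.links_arc (p := 0) (q := z - 1) (by grind) (by grind) hpred h.adj_left)
    (h.hole.links_arc (p := z + 1) (q := b) (by grind) (by grind) (h.hole.adj_succ z) h.adj_right)
    ((h.hole.links_arc (p := b + 2) (q := n - 2) ⟨hw, hwn⟩ ⟨hbt, htn⟩ hvw hut).insert_of_adj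
      hvz.symm)
    (h.hole.anticomplete_arc (by omega) (by omega))
    ((h.hole.anticomplete_arc (by omega) (by omega)).insert_right
      (hanti le_rfl (by omega) (by omega)))
    ((h.hole.anticomplete_arc (by omega) (by omega)).insert_right
      (hanti (by omega) le_rfl (by omega)))

-- The theta joins `f 0` to `v`, through `f (-1)`, along the sector to `f z`, and through `u`.
lemma containsTheta_of_adj_pred_of_adj_arc (h : IsSectorConfig G f b u v) (htri : G.CliqueFree 3)
    {p q i j : ℤ} (hz : 0 < z) (hzb : z < b) (hp : z + 2 ≤ p) (hq : q ≤ n - 3)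
    (hi : i ∈ Set.Icc p q) (hj : j ∈ Set.Icc p q) (hvpred : G.Adj v (f (-1 : ℤ)))
    (hvz : G.Adj v (f z)) (hui : G.Adj u (f i)) (hvj : G.Adj v (f j)) : ContainsTheta G := by
  have hpq := hi.1.trans hi.2
  have hpred : G.Adj (f (-1 : ℤ)) (f (0 : ℤ)) := h.hole.adj_succ (-1)
  have hu_pred : ¬G.Adj u (f (-1 : ℤ)) := fun hadj =>
    h.hole.not_adj_succ htri rfl hadj h.adj_left
  have hu_sector : Anticomplete G {u} (arc f 1 z) :=
    anticomplete_singleton_arc h.wheel.notMem_left fun k hk hkz =>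
      h.not_adj_inside k (by omega) (by omega)
  have hu_arc_pred : Anticomplete G {u} (arc f (-1) (-1)) :=
    anticomplete_singleton_arc h.wheel.notMem_left fun k hk hk' => by
      rwa [le_antisymm hk' hk]
  exact containsTheta_of_links (a := f (0 : ℤ)) (b := v) (fun heq => h.wheel.notMem_right ⟨_, heq⟩)
    (fun hadj => h.hole.not_adj_succ htri rfl hvpred hadj.symm)
    (h.hole.links_arc (p := -1) (q := -1) (by simp) (by simp) hpred.symm hvpred)
    (h.hole.links_arc (p := 1) (q := z) (by grind) (by grind) (h.hole.adj_succ 0) hvz)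
    ((h.hole.links_arc hi hj hui hvj).insert_of_adj h.adj_left.symm)
    (h.hole.anticomplete_arc (by omega) (by omega))
    ((h.hole.anticomplete_arc (by omega) (by omega)).insert_right hu_arc_pred)
    ((h.hole.anticomplete_arc (by omega) (by omega)).insert_right hu_sector)

lemma not_adj_far (h : IsSectorConfig G f b u v) (htheta : ¬ContainsTheta G)
    (htri : G.CliqueFree 3) (hz : 0 < z) (hzb : z < b) (hvz : G.Adj v (f z)) {w : ℤ}
    (hw : b + 2 ≤ w) (hwn : w ≤ n - 2) : ¬G.Adj v (f w) := by
  refine fun hvw => htheta (h.containsTheta_of_unique_adj_of_adj_far htri hz hzb hw hwn hvz hvw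
    fun k hk hkb hvk => ?_)
  rcases lt_trichotomy k z with hkz | hkz | hzk
  · exact absurd (h.containsTheta_of_two_adj_of_adj_far htri hk hkz hzb.le hw hwn hvk hvz hvw)
      htheta
  · exact hkz
  · exact absurd (h.containsTheta_of_two_adj_of_adj_far htri hz.le hzk hkb hw hwn hvz hvk hvw)
      htheta

lemma le_of_adj_pred (h : IsSectorConfig G f b u v) (htheta : ¬ContainsTheta G)
    (htri : G.CliqueFree 3) (hz : 0 < z) (hvpred : G.Adj v (f (-1 : ℤ))) (hvz : G.Adj v (f z))
    {k : ℤ} (hkb : k ≤ b) (hvk : G.Adj v (f k)) : k ≤ z := by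
  obtain ⟨t, hbt, htn, -⟩ := h.exists_adj_far htri
  by_contra! hzk
  have hgap : k ≠ z + 1 := fun heq => h.hole.not_adj_succ htri heq hvz hvk
  exact htheta (h.containsTheta_of_adj_pred_of_adj_arc htri hz (by omega) (by omega) (by omega)
    ⟨hkb, le_rfl⟩ ⟨le_rfl, hkb⟩ hvpred hvz h.adj_right hvk)

lemma eq_of_adj_pred (h : IsSectorConfig G f b u v) (htheta : ¬ContainsTheta G)
    (htri : G.CliqueFree 3) (hz : 0 < z) (hzb : z < b) (hvpred : G.Adj v (f (-1 : ℤ)))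
    (hvz : G.Adj v (f z)) {k : ℤ} (hk : 0 ≤ k) (hkb : k ≤ b) (hvk : G.Adj v (f k)) : k = z := by
  have hk₀ : k ≠ 0 := by
    rintro rfl
    exact h.hole.not_adj_succ htri rfl hvpred hvk
  exact le_antisymm (h.le_of_adj_pred htheta htri hz hvpred hvz hkb hvk)
    (h.le_of_adj_pred htheta htri (by omega) hvpred hvk hzb.le hvz)

lemma adj_succ_right_of_adj_pred (h : IsSectorConfig G f b u v) (htheta : ¬ContainsTheta G)
    (htri : G.CliqueFree 3) (hz : 0 < z) (hzb : z < b) (hvpred : G.Adj v (f (-1 : ℤ)))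
    (hvz : G.Adj v (f z)) : G.Adj v (f (b + 1 : ℤ)) := by
  have := h.hole.neZero
  obtain ⟨m, hm, hmpred, hmz⟩ :=
    exists_mem_ne_ne_of_three_le_ncard h.wheel.three_le_ncard_right ((-1 : ℤ) : ZMod n) (z : ZMod n)
  obtain ⟨k, hk, hkn, rfl⟩ := exists_intCast_zmod_eq (-1) m
  have hkpred : k ≠ -1 := fun heq => hmpred (by rw [heq])
  have hbk : b < k := by
    by_contra! hkb
    exact hmz (by rw [h.eq_of_adj_pred htheta htri hz hzb hvpred hvz (by omega) hkb hm])
  have hkb : k < b + 2 := by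
    by_contra! hbk
    exact h.not_adj_far htheta htri hz hzb hvz hbk (by omega) hm
  rwa [show b + 1 = k by omega]

lemma adj_pred_of_adj_succ_right (h : IsSectorConfig G f b u v) (htheta : ¬ContainsTheta G)
    (htri : G.CliqueFree 3) (hz : 0 < z) (hzb : z < b) (hvz : G.Adj v (f z))
    (hvsucc : G.Adj v (f (b + 1 : ℤ))) : G.Adj v (f (-1 : ℤ)) := by
  have := h.reflect.adj_succ_right_of_adj_pred htheta htri (z := b - z) (by omega) (by omega)
    (by simpa using hvsucc) (by simpa using hvz)
  simpa using this

lemma nestedCfg_of_forall_adj (h : IsSectorConfig G f b u v)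
    (hv : ∀ m, G.Adj v (f m) → ∃ k : ℤ, 0 ≤ k ∧ k ≤ b ∧ (k : ZMod n) = m) :
    NestedCfg G n f v u := by
  have hpos := h.pos
  have hlt := h.lt
  have : NeZero n := ⟨by omega⟩
  lift b to ℕ using hpos.le
  refine ⟨0, b, by omega, by omega, fun m hm => ?_, fun m hm => ?_⟩
  · obtain ⟨k, hk, hkb, rfl⟩ := hv m hm
    lift k to ℕ using hk
    exact ⟨k, by omega, by simp⟩
  · obtain ⟨k, hk, hkn, rfl⟩ := exists_intCast_zmod_eq 1 m
    have hbk : b ≤ k := not_lt.1 fun hlt => h.not_adj_inside k (by omega) hlt hm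
    lift k to ℕ using by omega
    exact ⟨k - b, by omega, by rw [Nat.cast_sub (by omega)]; simp⟩

lemma eq_succ_of_adj_pred_of_adj_succ_right (h : IsSectorConfig G f b u v)
    (htheta : ¬ContainsTheta G) (htri : G.CliqueFree 3) (hz : 0 < z) (hzb : z < b)
    (hvpred : G.Adj v (f (-1 : ℤ))) (hvz : G.Adj v (f z)) (hvsucc : G.Adj v (f (b + 1 : ℤ))) :
    b = z + 1 := by
  obtain ⟨t, hbt, htn, -⟩ := h.exists_adj_far htri
  by_contra hgap
  exact htheta (h.containsTheta_of_adj_pred_of_adj_arc htri (p := b) (q := b + 1) hz hzb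
    (by omega) (by omega) (by grind) (by grind) hvpred hvz h.adj_right hvsucc)

lemma sub_two_le_of_adj (h : IsSectorConfig G f b u v) (htheta : ¬ContainsTheta G)
    (htri : G.CliqueFree 3) (hz : 0 < z) (hzb : z < b) (hvpred : G.Adj v (f (-1 : ℤ)))
    (hvz : G.Adj v (f z)) (hvsucc : G.Adj v (f (b + 1 : ℤ))) {t : ℤ} (hbt : b < t)
    (hut : G.Adj u (f t)) : n - 2 ≤ t := by
  by_contra! htn
  exact htheta (h.containsTheta_of_adj_pred_of_adj_arc htri (p := b + 1) (q := t) hz hzb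
    (by omega) (by omega) (by grind) (by grind) hvpred hvz hut hvsucc)

lemma sectorLength_eq_two_and_rimLength_eq_six (h : IsSectorConfig G f b u v)
    (htheta : ¬ContainsTheta G) (htri : G.CliqueFree 3) (hz : 0 < z) (hzb : z < b)
    (hvpred : G.Adj v (f (-1 : ℤ))) (hvz : G.Adj v (f z)) (hvsucc : G.Adj v (f (b + 1 : ℤ))) :
    b = 2 ∧ n = 6 := by
  obtain ⟨t, hbt, htn, hut⟩ := h.exists_adj_far htri
  have hvpred' : G.Adj v (f (b - (-1 : ℤ))) := by simpa using hvsucc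
  have hvsucc' : G.Adj v (f (b - (b + 1 : ℤ))) := by simpa using hvpred
  have hvz' : G.Adj v (f (b - (b - z : ℤ))) := by simpa using hvz
  have hright := h.eq_succ_of_adj_pred_of_adj_succ_right htheta htri hz hzb hvpred hvz hvsucc
  have hleft := h.reflect.eq_succ_of_adj_pred_of_adj_succ_right htheta htri (z := b - z)
    (by omega) (by omega) hvpred' hvz' hvsucc'
  have hright_far := h.sub_two_le_of_adj htheta htri hz hzb hvpred hvz hvsucc (by omega) hut
  have hleft_far := h.reflect.sub_two_le_of_adj htheta htri (z := b - z) (t := n + b - t)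
    (by omega) (by omega) hvpred' hvz' hvsucc' (by omega) (by simpa using hut)
  omega

lemma containsCube (h : IsSectorConfig G f b u v) (htheta : ¬ContainsTheta G)
    (htri : G.CliqueFree 3) (hz : 0 < z) (hzb : z < b) (hvpred : G.Adj v (f (-1 : ℤ)))
    (hvz : G.Adj v (f z)) (hvsucc : G.Adj v (f (b + 1 : ℤ))) : ContainsCube G := by
  obtain ⟨rfl, rfl⟩ :=
    h.sectorLength_eq_two_and_rimLength_eq_six htheta htri hz hzb hvpred hvz hvsucc
  obtain rfl : z = 1 := by omega
  obtain ⟨t, hbt, htn, hu₄⟩ := h.exists_adj_far htri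
  obtain rfl : t = 4 := by omega
  have hu₀ : G.Adj u (f 0) := by simpa using h.adj_left
  have hv₁ : G.Adj v (f 1) := by simpa using hvz
  exact ⟨f, u, v, h.hole, h.wheel.notMem_left, h.wheel.notMem_right, h.not_adj,
    h.hole.adj_iff_of_adj_of_adj_add_two_of_adj_add_four htri hu₀ h.adj_right hu₄,
    h.hole.adj_iff_of_adj_of_adj_add_two_of_adj_add_four htri hv₁ hvsucc hvpred⟩

lemma nestedCfg (h : IsSectorConfig G f b u v) (htheta : ¬ContainsTheta G)
    (htri : G.CliqueFree 3) (hcube : ¬ContainsCube G) (hz : 0 < z) (hzb : z < b)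
    (hvz : G.Adj v (f z)) : NestedCfg G n f v u := by
  have := h.hole.neZero
  have hvpred : ¬G.Adj v (f (-1 : ℤ)) := fun hvpred =>
    hcube (h.containsCube htheta htri hz hzb hvpred hvz
      (h.adj_succ_right_of_adj_pred htheta htri hz hzb hvpred hvz))
  have hvsucc : ¬G.Adj v (f (b + 1 : ℤ)) := fun hvsucc =>
    hvpred (h.adj_pred_of_adj_succ_right htheta htri hz hzb hvz hvsucc)
  refine h.nestedCfg_of_forall_adj fun m hm => ?_
  obtain ⟨k, hk, hkn, rfl⟩ := exists_intCast_zmod_eq (-1) m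
  have hkpred : k ≠ -1 := fun heq => hvpred (heq ▸ hm)
  have hksucc : k ≠ b + 1 := fun heq => hvsucc (heq ▸ hm)
  have hkfar : k < b + 2 := not_le.1 fun hbk =>
    h.not_adj_far htheta htri hz hzb hvz hbk (by omega) hm
  exact ⟨k, by omega, by omega, rfl⟩

end IsSectorConfig

lemma Is2WheelCfg.nestedCfg {W : Type} {G : SimpleGraph W} {n : ℕ} {f : ZMod n → W} {u v : W}
    (htheta : ¬ContainsTheta G) (htri : G.CliqueFree 3) (hcube : ¬ContainsCube G)
    (h : Is2WheelCfg G n f u v) (huv : ¬G.Adj u v) : NestedCfg G n f u v := by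
  obtain ⟨m, hum, hvm⟩ := h.swap.exists_adj_of_not_adj htheta htri fun hvu => huv hvu.symm
  obtain ⟨x, b, z, hz, hzb, rfl, hsector⟩ :=
    h.swap.exists_isSectorConfig (fun hvu => huv hvu.symm) hvm
  exact nestedCfg_of_comp_add_left (hsector.nestedCfg htheta htri hcube hz hzb hum)

theorem statement7_general {W : Type} (G : SimpleGraph W) (hTheta : ¬ContainsTheta G)
    (hTri : G.CliqueFree 3) (hCube : ¬ContainsCube G) : InClassC G :=
  ⟨hTheta, not_containsPrism_of_cliqueFree_three hTri,
    not_containsPyramid_of_cliqueFree_three hTri, not_containsButterfly_of_cliqueFree_three hTri,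
    fun _ _ _ _ hwheel huv => .inl (hwheel.nestedCfg hTheta hTri hCube huv)⟩

/-- Every (theta, triangle, cube)-free graph belongs to the class 𝒞. -/
theorem statement7 (G : SimpleGraph V)
    (hTheta : ¬ContainsTheta G) (hTri : G.CliqueFree 3) (hCube : ¬ContainsCube G) :
    InClassC G :=
  statement7_general G hTheta hTri hCube
end

section
/- If G is a (theta, prism, pyramid, even wheel, square)-free graph, then G belongs to the class 𝒞, i.e., G is (theta, prism, pyramid, butterfly)-free and every 2-wheel in G with non-adjacent centers is either a nested wheel or a cousin wheel. -/
open SimpleGraph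

variable {V : Type} [Fintype V] [DecidableEq V]

/-!
Let `u` and `v` be the non-adjacent centers of a 2-wheel. Two non-adjacent common neighbours on the
rim would give a square, so some rim neighbour of `v` lies strictly inside a sector of `u`. That
sector and `u` form a hole `C`. The main tool: if a chordless path runs from `x ∈ C` to `v`, with
interior anticomplete to `C` apart from `x`, and `v` is not adjacent to `x` but has a neighbour
on `C`, then that neighbour is unique and adjacent to `x`; otherwise there is a theta or a pyramid.

Consider the rim neighbours of `v` outside the sector.
* If there is none, the 2-wheel is nested.
* If there is one, then `v`, having an odd number of rim neighbours, has an even number on `C`,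
  hence two adjacent ones, and without pyramids its three rim neighbours are consecutive.
* If there are more, and `u` has a neighbour at distance at least two from the sector, then a path
  from `u` to `v` outside the sector leaves `v` only the two rim vertices next to the sector.
  Two further uses of the tool make `v` adjacent to both ends of the sector, which gives a square.
* If there are more and `u` has no such neighbour, then `u` has three consecutive rim neighbours.

When one center has three consecutive rim neighbours, its only other sector is the rest of the rim,
and the second case above, applied there, shows that the 2-wheel is nested or a cousin wheel.
-/

section Paths

variable {α : Type} {G : SimpleGraph α} {a b c : α} {S : Set α}

/-- `S` is the vertex set of a chordless path of `G` from `a` to `b`. Working with vertex sets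
keeps walks out of the combinatorial arguments. -/
def InducedPathOn (G : SimpleGraph α) (a b : α) (S : Set α) : Prop :=
  ∃ p : G.Walk a b, IsInducedPathW G p ∧ ∀ x, x ∈ p.support ↔ x ∈ S

theorem InducedPathOn.singleton (G : SimpleGraph α) (a : α) : InducedPathOn G a a {a} := by
  refine ⟨Walk.nil, ⟨Walk.IsPath.nil, fun u v hu hv huv => ?_⟩, by simp⟩
  rw [Walk.mem_support_nil_iff] at hu hv
  exact absurd (hu.trans hv.symm) huv.ne

theorem InducedPathOn.cons (hp : InducedPathOn G a b S) (hca : G.Adj c a) (hc : c ∉ S)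
    (hcS : ∀ x ∈ S, G.Adj c x → x = a) : InducedPathOn G c b (insert c S) := by
  obtain ⟨p, ⟨hpath, hind⟩, hsupp⟩ := hp
  refine ⟨Walk.cons hca p, ⟨hpath.cons (by rwa [hsupp]), fun u v hu hv huv => ?_⟩,
    by simp [hsupp]⟩
  rw [Walk.support_cons, List.mem_cons] at hu hv
  simp only [Walk.toSubgraph, Subgraph.sup_adj, subgraphOfAdj_adj]
  rcases hu with rfl | hu <;> rcases hv with rfl | hv
  · exact absurd rfl huv.ne
  · exact .inl (by rw [hcS v ((hsupp v).1 hv) huv])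
  · exact .inl (by rw [hcS u ((hsupp u).1 hu) huv.symm, Sym2.eq_swap])
  · exact .inr (hind u v hu hv huv)

theorem InducedPathOn.symm (hp : InducedPathOn G a b S) : InducedPathOn G b a S := by
  obtain ⟨p, ⟨hpath, hind⟩, hsupp⟩ := hp
  refine ⟨p.reverse, ⟨hpath.reverse, ?_⟩, by simp [hsupp]⟩
  simpa only [Walk.support_reverse, List.mem_reverse, Walk.toSubgraph_reverse] using hind

theorem InducedPathOn.concat (hp : InducedPathOn G a b S) (hcb : G.Adj c b) (hc : c ∉ S)
    (hcS : ∀ x ∈ S, G.Adj c x → x = b) : InducedPathOn G a c (insert c S) :=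
  (hp.symm.cons hcb hc hcS).symm

theorem one_le_length_of_ne (p : G.Walk a b) (hab : a ≠ b) : 1 ≤ p.length :=
  Nat.one_le_iff_ne_zero.2 fun h => hab (Walk.eq_of_length_eq_zero h)

theorem two_le_length_of_not_adj (p : G.Walk a b) (hab : a ≠ b) (hadj : ¬G.Adj a b) :
    2 ≤ p.length :=
  (one_le_length_of_ne p hab).lt_of_ne' fun h => hadj (Walk.adj_of_length_eq_one h)

theorem containsTheta_of_inducedPathOn {S₁ S₂ S₃ : Set α} (hab : a ≠ b) (hadj : ¬G.Adj a b)
    (h₁ : InducedPathOn G a b S₁) (h₂ : InducedPathOn G a b S₂) (h₃ : InducedPathOn G a b S₃)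
    (h₁₂ : ∀ x ∈ S₁, ∀ y ∈ S₂, x ≠ a → x ≠ b → y ≠ a → y ≠ b → x ≠ y ∧ ¬G.Adj x y)
    (h₁₃ : ∀ x ∈ S₁, ∀ y ∈ S₃, x ≠ a → x ≠ b → y ≠ a → y ≠ b → x ≠ y ∧ ¬G.Adj x y)
    (h₂₃ : ∀ x ∈ S₂, ∀ y ∈ S₃, x ≠ a → x ≠ b → y ≠ a → y ≠ b → x ≠ y ∧ ¬G.Adj x y) :
    ContainsTheta G := by
  obtain ⟨p₁, hp₁, hS₁⟩ := h₁
  obtain ⟨p₂, hp₂, hS₂⟩ := h₂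
  obtain ⟨p₃, hp₃, hS₃⟩ := h₃
  refine ⟨a, b, p₁, p₂, p₃, ⟨hp₁, hp₂, hp₃⟩, ⟨two_le_length_of_not_adj _ hab hadj,
    two_le_length_of_not_adj _ hab hadj, two_le_length_of_not_adj _ hab hadj⟩, ?_, ?_⟩
  · intro w hw
    simp only [hS₁, hS₂, hS₃] at hw
    by_contra! hne
    rcases hw with ⟨hx, hy⟩ | ⟨hx, hy⟩ | ⟨hx, hy⟩
    · exact (h₁₂ w hx w hy hne.1 hne.2 hne.1 hne.2).1 rfl
    · exact (h₁₃ w hx w hy hne.1 hne.2 hne.1 hne.2).1 rfl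
    · exact (h₂₃ w hx w hy hne.1 hne.2 hne.1 hne.2).1 rfl
  · intro u w hua hub hwa hwb hw
    simp only [hS₁, hS₂, hS₃] at hw
    rcases hw with ⟨hx, hy⟩ | ⟨hx, hy⟩ | ⟨hx, hy⟩
    · exact (h₁₂ u hx w hy hua hub hwa hwb).2
    · exact (h₁₃ u hx w hy hua hub hwa hwb).2
    · exact (h₂₃ u hx w hy hua hub hwa hwb).2

theorem containsPyramid_of_inducedPathOn {b₁ b₂ b₃ : α} {S₁ S₂ S₃ : Set α}
    (h₁ : InducedPathOn G a b₁ S₁) (h₂ : InducedPathOn G a b₂ S₂) (h₃ : InducedPathOn G a b₃ S₃)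
    (hne₁ : a ≠ b₁) (hne₂ : a ≠ b₂) (hne₃ : a ≠ b₃)
    (hlong : (¬G.Adj a b₁ ∧ ¬G.Adj a b₂) ∨ (¬G.Adj a b₁ ∧ ¬G.Adj a b₃) ∨
      (¬G.Adj a b₂ ∧ ¬G.Adj a b₃))
    (hb₁₂ : G.Adj b₁ b₂) (hb₂₃ : G.Adj b₂ b₃) (hb₁₃ : G.Adj b₁ b₃)
    (h₁₂ : ∀ x ∈ S₁, ∀ y ∈ S₂, x ≠ a → y ≠ a → x ≠ y ∧ (G.Adj x y → x = b₁ ∧ y = b₂))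
    (h₁₃ : ∀ x ∈ S₁, ∀ y ∈ S₃, x ≠ a → y ≠ a → x ≠ y ∧ (G.Adj x y → x = b₁ ∧ y = b₃))
    (h₂₃ : ∀ x ∈ S₂, ∀ y ∈ S₃, x ≠ a → y ≠ a → x ≠ y ∧ (G.Adj x y → x = b₂ ∧ y = b₃)) :
    ContainsPyramid G := by
  obtain ⟨p₁, hp₁, hS₁⟩ := h₁
  obtain ⟨p₂, hp₂, hS₂⟩ := h₂
  obtain ⟨p₃, hp₃, hS₃⟩ := h₃
  have htwo₁ := two_le_length_of_not_adj p₁ hne₁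
  have htwo₂ := two_le_length_of_not_adj p₂ hne₂
  have htwo₃ := two_le_length_of_not_adj p₃ hne₃
  refine ⟨a, b₁, b₂, b₃, p₁, p₂, p₃, ⟨hp₁, hp₂, hp₃⟩, ⟨one_le_length_of_ne _ hne₁,
    one_le_length_of_ne _ hne₂, one_le_length_of_ne _ hne₃⟩, by tauto, ⟨hb₁₂, hb₂₃, hb₁₃⟩,
    ?_, ?_, ?_, ?_⟩ <;> simp only [hS₁, hS₂, hS₃]
  · intro w hw
    by_contra hne
    rcases hw with ⟨hx, hy⟩ | ⟨hx, hy⟩ | ⟨hx, hy⟩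
    · exact (h₁₂ w hx w hy hne hne).1 rfl
    · exact (h₁₃ w hx w hy hne hne).1 rfl
    · exact (h₂₃ w hx w hy hne hne).1 rfl
  · exact fun u w hu hw hua hwa => (h₁₂ u hu w hw hua hwa).2
  · exact fun u w hu hw hua hwa => (h₁₃ u hu w hw hua hwa).2
  · exact fun u w hu hw hua hwa => (h₂₃ u hu w hw hua hwa).2

end Paths

section Holes

variable {α : Type} {G : SimpleGraph α} {n : ℕ} {h : ℤ → α}

/-- The vertices of a hole of length `n`, read cyclically: position `i` and position `i + n` carry
the same vertex. Indexing by `ℤ` makes every arc an interval and turns rotation and reflection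
of the hole into `i ↦ i + c` and `i ↦ -i`. -/
structure IsHoleSeq (G : SimpleGraph α) (n : ℕ) (h : ℤ → α) : Prop where
  four_le : 4 ≤ n
  periodic : ∀ i : ℤ, h (i + n) = h i
  inj : ∀ i j : ℤ, i - n < j → j < i + n → h i = h j → i = j
  adj_iff : ∀ i j : ℤ, i < j → j < i + n → (G.Adj (h i) (h j) ↔ j = i + 1 ∨ j + 1 = i + n)

/-- `C` is the vertex set of a hole of `G`. -/
def IsHole (G : SimpleGraph α) (C : Set α) : Prop :=
  ∃ (n : ℕ) (f : ZMod n → α), IsHoleEmb G n f ∧ Set.range f = C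

theorem zmod_intCast_eq_iff_of_abs_lt {i j : ℤ} (hij : i - n < j) (hji : j < i + n) :
    (i : ZMod n) = j ↔ i = j := by
  rw [ZMod.intCast_eq_intCast_iff_dvd_sub]
  refine ⟨fun hdvd => ?_, by rintro rfl; simp⟩
  have := Int.eq_zero_of_abs_lt_dvd hdvd (abs_lt.2 ⟨by omega, by omega⟩)
  omega

theorem zmod_consecutive_iff {i j : ℤ} (hij : i < j) (hji : j < i + n) :
    ((j : ZMod n) = i + 1 ∨ (i : ZMod n) = j + 1) ↔ j = i + 1 ∨ j + 1 = i + n := by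
  have hsucc : (j : ZMod n) = i + 1 ↔ j = i + 1 := by
    rw [← zmod_intCast_eq_iff_of_abs_lt (n := n) (by omega) (by omega)]; push_cast; rfl
  have hwrap : (i : ZMod n) = j + 1 ↔ j + 1 = i + n := by
    rw [← zmod_intCast_eq_iff_of_abs_lt (n := n) (by omega) (by omega)]; push_cast
    rw [ZMod.natCast_self, add_zero, eq_comm]
  rw [hsucc, hwrap]

theorem IsHoleEmb.isHoleSeq {f : ZMod n → α} (hf : IsHoleEmb G n f) :
    IsHoleSeq G n (fun i => f i) where
  four_le := hf.1
  periodic i := by simp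
  inj i j hij hji heq := (zmod_intCast_eq_iff_of_abs_lt hij hji).1 (hf.2.1 heq)
  adj_iff i j hij hji := by rw [hf.2.2, zmod_consecutive_iff hij hji]

theorem range_comp_intCast_zmod (f : ZMod n → α) : Set.range (fun i : ℤ => f i) = Set.range f :=
  ZMod.intCast_surjective.range_comp f

theorem isHoleEmb_comp_val {g : ℕ → α} (hn : 4 ≤ n)
    (hinj : ∀ i j, i < j → j < n → g i ≠ g j)
    (hadj : ∀ i j, i < j → j < n → (G.Adj (g i) (g j) ↔ j = i + 1 ∨ (i = 0 ∧ j + 1 = n))) :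
    IsHoleEmb G n fun m => g m.val := by
  have : NeZero n := ⟨by omega⟩
  have hlt (i j : ZMod n) (hij : i.val < j.val) :
      G.Adj (g i.val) (g j.val) ↔ j = i + 1 ∨ i = j + 1 := by
    have hj := ZMod.val_lt j
    have hcons := zmod_consecutive_iff (n := n) (i := i.val) (j := j.val) (by omega) (by omega)
    simp only [Int.cast_natCast, ZMod.natCast_zmod_val] at hcons
    rw [hadj _ _ hij hj, hcons]
    omega
  refine ⟨hn, fun i j heq => ?_, fun i j => ?_⟩
  · rcases lt_trichotomy i.val j.val with hij | hij | hij
    · exact absurd heq (hinj _ _ hij (ZMod.val_lt j))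
    · exact ZMod.val_injective n hij
    · exact absurd heq.symm (hinj _ _ hij (ZMod.val_lt i))
  · rcases lt_trichotomy i.val j.val with hij | hij | hij
    · exact hlt i j hij
    · have : Fact (1 < n) := ⟨by omega⟩
      simp [ZMod.val_injective n hij]
    · rw [G.adj_comm, hlt j i hij, or_comm]

theorem range_comp_val [NeZero n] (g : ℕ → α) :
    Set.range (fun m : ZMod n => g m.val) = g '' Set.Iio n := by
  ext x
  constructor
  · rintro ⟨m, rfl⟩
    exact ⟨m.val, ZMod.val_lt m, rfl⟩
  · rintro ⟨i, hi, rfl⟩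
    exact ⟨i, by simp only [ZMod.val_natCast_of_lt hi]⟩

theorem isHole_image_Iio {g : ℕ → α} (hn : 4 ≤ n)
    (hinj : ∀ i j, i < j → j < n → g i ≠ g j)
    (hadj : ∀ i j, i < j → j < n → (G.Adj (g i) (g j) ↔ j = i + 1 ∨ (i = 0 ∧ j + 1 = n))) :
    IsHole G (g '' Set.Iio n) :=
  have : NeZero n := ⟨by omega⟩
  ⟨n, _, isHoleEmb_comp_val hn hinj hadj, range_comp_val g⟩

namespace IsHoleSeq

theorem translate (H : IsHoleSeq G n h) (c : ℤ) : IsHoleSeq G n (fun i => h (i + c)) where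
  four_le := H.four_le
  periodic i := by rw [add_right_comm, H.periodic]
  inj i j hij hji heq := by have := H.inj _ _ (by omega) (by omega) heq; omega
  adj_iff i j hij hji := by rw [H.adj_iff _ _ (by omega) (by omega)]; omega

theorem reflect (H : IsHoleSeq G n h) : IsHoleSeq G n (fun i => h (-i)) where
  four_le := H.four_le
  periodic i := by rw [← H.periodic]; congr 1; ring
  inj i j hij hji heq := by have := H.inj _ _ (by omega) (by omega) heq; omega
  adj_iff i j hij hji := by rw [G.adj_comm, H.adj_iff _ _ (by omega) (by omega)]; omega

theorem exists_mem_window (H : IsHoleSeq G n h) (s i : ℤ) :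
    ∃ j, s ≤ j ∧ j < s + n ∧ h j = h i := by
  have hn : (0 : ℤ) < n := by have := H.four_le; omega
  have hper : Function.Periodic h n := H.periodic
  obtain ⟨j, ⟨hsj, hjs⟩, hj⟩ := hper.exists_mem_Ico hn i s
  exact ⟨j, hsj, hjs, hj.symm⟩

theorem image_Ico_eq_range (H : IsHoleSeq G n h) (s : ℤ) :
    h '' Set.Ico s (s + n) = Set.range h := by
  refine (Set.image_subset_range _ _).antisymm ?_
  rintro _ ⟨i, rfl⟩
  obtain ⟨j, hsj, hjs, hj⟩ := H.exists_mem_window s i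
  exact ⟨j, ⟨hsj, hjs⟩, hj⟩

theorem isHole_range (H : IsHoleSeq G n h) : IsHole G (Set.range h) := by
  have himage : (fun i : ℕ => h i) '' Set.Iio n = Set.range h := by
    rw [← H.image_Ico_eq_range 0]
    ext x
    constructor
    · rintro ⟨i, hi, rfl⟩
      exact ⟨i, ⟨by omega, by simpa using hi⟩, rfl⟩
    · rintro ⟨i, ⟨h0, hi⟩, rfl⟩
      lift i to ℕ using h0
      exact ⟨i, by simpa using hi, rfl⟩
  rw [← himage]
  refine isHole_image_Iio H.four_le (fun i j hij hj heq => ?_) fun i j hij hj => ?_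
  · have := H.inj _ _ (by omega) (by omega) heq
    omega
  · rw [H.adj_iff _ _ (by omega) (by omega)]
    omega

theorem inducedPathOn_arc (H : IsHoleSeq G n h) {s t : ℤ} (hst : s ≤ t) (hts : t + 2 ≤ s + n) :
    InducedPathOn G (h s) (h t) (h '' Set.Icc s t) := by
  obtain ⟨k, rfl⟩ := Int.le.dest hst
  induction k generalizing s with
  | zero => simpa using InducedPathOn.singleton G (h s)
  | succ k ih =>
    have htail := ih (s := s + 1) (by omega) (by omega)
    rw [show s + 1 + (k : ℤ) = s + (k + 1 : ℕ) by push_cast; ring] at htail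
    have hcons := htail.cons (c := h s) ((H.adj_iff _ _ (by omega) (by omega)).2 (by omega)) ?_ ?_
    · have hIcc : insert s (Set.Icc (s + 1) (s + (k + 1 : ℕ))) = Set.Icc s (s + (k + 1 : ℕ)) :=
        Set.insert_Icc_succ_left_eq_Icc hst
      rwa [← Set.image_insert_eq, hIcc] at hcons
    · rintro ⟨j, ⟨hj, hj'⟩, heq⟩
      have := H.inj _ _ (by omega) (by omega) heq
      omega
    · rintro _ ⟨j, ⟨hj, hj'⟩, rfl⟩ hadj
      rw [H.adj_iff _ _ (by omega) (by omega)] at hadj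
      rw [show j = s + 1 by omega]

theorem adj_succ (H : IsHoleSeq G n h) (i : ℤ) : G.Adj (h i) (h (i + 1)) := by
  have := H.four_le
  exact (H.adj_iff _ _ (by omega) (by omega)).2 (by omega)

theorem not_adj_of_add_two_le (H : IsHoleSeq G n h) {i j : ℤ} (hij : i + 2 ≤ j)
    (hji : j + 2 ≤ i + n) : ¬G.Adj (h i) (h j) := by
  rw [H.adj_iff _ _ (by omega) (by omega)]
  omega

end IsHoleSeq

theorem IsHole.exists_isHoleSeq {C : Set α} {x : α} (hC : IsHole G C) (hx : x ∈ C) :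
    ∃ (n : ℕ) (h : ℤ → α), IsHoleSeq G n h ∧ Set.range h = C ∧ h 0 = x := by
  obtain ⟨n, f, hf, rfl⟩ := hC
  rw [← range_comp_intCast_zmod f] at hx
  obtain ⟨c, rfl⟩ := hx
  refine ⟨n, _, hf.isHoleSeq.translate c, ?_, by simp⟩
  rw [← range_comp_intCast_zmod f]
  exact (Equiv.addRight c).surjective.range_comp fun i : ℤ => f i

theorem ncard_adj_comp_eq {f : ZMod n → α} (hf : Function.Injective f) (v : α) :
    {m : ZMod n | G.Adj v (f m)}.ncard = (G.neighborSet v ∩ Set.range f).ncard := by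
  rw [← Set.image_preimage_eq_inter_range, Set.ncard_image_of_injective _ hf]
  rfl

theorem IsHole.containsEvenWheel {C : Set α} {v : α} (hC : IsHole G C) (hv : v ∉ C)
    (hthree : 3 ≤ (G.neighborSet v ∩ C).ncard) (heven : Even (G.neighborSet v ∩ C).ncard) :
    ContainsEvenWheel G := by
  obtain ⟨n, f, hf, rfl⟩ := hC
  rw [← ncard_adj_comp_eq hf.2.1] at hthree heven
  exact ⟨n, f, v, hf, hv, hthree, heven⟩

theorem IsHole.containsEvenWheel_of_four {C : Set α} {v a b c d : α} (hC : IsHole G C)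
    (hv : v ∉ C) (hN : G.neighborSet v ∩ C = {a, b, c, d}) (hab : a ≠ b) (hac : a ≠ c)
    (had : a ≠ d) (hbc : b ≠ c) (hbd : b ≠ d) (hcd : c ≠ d) : ContainsEvenWheel G := by
  have hcard : (G.neighborSet v ∩ C).ncard = 4 := by
    rw [hN, Set.ncard_insert_of_notMem (by simp [hab, hac, had]),
      Set.ncard_insert_of_notMem (by simp [hbc, hbd]), Set.ncard_pair hcd]
  exact hC.containsEvenWheel hv (by omega) (by rw [hcard]; decide)

theorem containsSquare_of_adj {a b c d : α} (hac : a ≠ c) (hbd : b ≠ d) (hab : G.Adj a b)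
    (hbc : G.Adj b c) (hcd : G.Adj c d) (hda : G.Adj d a) (hac' : ¬G.Adj a c)
    (hbd' : ¬G.Adj b d) : ContainsSquare G := by
  refine ⟨_, isHoleEmb_comp_val (g := fun i => [a, b, c, d].getD i a) le_rfl
    (fun i j hij hj => ?_) fun i j hij hj => ?_⟩
  · interval_cases j <;> interval_cases i <;>
      simp [hac, hbd, hab.ne, hbc.ne, hcd.ne, hda.ne']
  · interval_cases j <;> interval_cases i <;>
      simp [hab, hbc, hcd, hda.symm, hac', hbd']

/-- A sector of the rim `h` for the vertex `u` off the rim, running from `h s` to `h t`: the ends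
are neighbours of `u`, the vertices strictly between them are not. The bounds say that both arcs
between the ends have length at least two. -/
structure IsLongSector (G : SimpleGraph α) (n : ℕ) (h : ℤ → α) (u : α) (s t : ℤ) : Prop where
  notMem : u ∉ Set.range h
  add_two_le : s + 2 ≤ t
  add_two_le_add : t + 2 ≤ s + n
  adj_left : G.Adj u (h s)
  adj_right : G.Adj u (h t)
  not_adj_inner : ∀ i : ℤ, s < i → i < t → ¬G.Adj u (h i)

theorem IsLongSector.reflect {u : α} {s t : ℤ} (U : IsLongSector G n h u s t) :
    IsLongSector G n (fun i => h (-i)) u (-t) (-s) where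
  notMem := by
    rintro ⟨i, hi⟩
    exact U.notMem ⟨-i, hi⟩
  add_two_le := by have := U.add_two_le; omega
  add_two_le_add := by have := U.add_two_le_add; omega
  adj_left := by simpa using U.adj_right
  adj_right := by simpa using U.adj_left
  not_adj_inner i hi hi' := U.not_adj_inner _ (by omega) (by omega)

theorem IsLongSector.isHole {u : α} {s t : ℤ} (U : IsLongSector G n h u s t)
    (H : IsHoleSeq G n h) : IsHole G (insert u (h '' Set.Icc s t)) := by
  obtain ⟨d, hd⟩ := Int.le.dest (show s ≤ t by have := U.add_two_le; omega)
  have hst := U.add_two_le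
  have hts := U.add_two_le_add
  let g : ℕ → α := fun i => if i ≤ d then h (s + i) else u
  have himage : g '' Set.Iio (d + 2) = insert u (h '' Set.Icc s t) := by
    ext x
    constructor
    · rintro ⟨i, -, rfl⟩
      by_cases hi : i ≤ d
      · exact .inr ⟨s + i, ⟨by omega, by omega⟩, by simp [g, hi]⟩
      · exact .inl (by simp [g, hi])
    · rintro (rfl | ⟨i, ⟨hi, hi'⟩, rfl⟩)
      · exact ⟨d + 1, by simp, by simp [g]⟩
      · obtain ⟨k, rfl⟩ := Int.le.dest hi
        have hk : k ≤ d := by omega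
        exact ⟨k, by rw [Set.mem_Iio]; omega, by simp [g, hk]⟩
  have hmem (i : ℤ) : h i ≠ u := fun hi => U.notMem ⟨i, hi⟩
  rw [← himage]
  refine isHole_image_Iio (by omega) (fun i j hij hj heq => ?_) fun i j hij hj => ?_
  · by_cases hjd : j ≤ d
    · simp only [g, hij.le.trans hjd, hjd, if_true] at heq
      have := H.inj _ _ (by omega) (by omega) heq
      omega
    · simp only [g, show i ≤ d by omega, hjd, if_true, if_false] at heq
      exact hmem _ heq
  · by_cases hjd : j ≤ d
    · simp only [g, hij.le.trans hjd, hjd, if_true]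
      rw [H.adj_iff _ _ (by omega) (by omega)]
      omega
    · simp only [g, show i ≤ d by omega, hjd, if_true, if_false, G.adj_comm _ u]
      have hleft : i = 0 → G.Adj u (h (s + i)) := by rintro rfl; simpa using U.adj_left
      have hright : i = d → G.Adj u (h (s + i)) := by rintro rfl; rw [hd]; exact U.adj_right
      have hinner := U.not_adj_inner (s + i)
      by_cases hi : i = 0 ∨ i = d
      · simp only [hi.elim hleft hright, true_iff]; omega
      · simp only [hinner (by omega) (by omega), false_iff]; omega

theorem exists_first_int {P : ℤ → Prop} {s m : ℤ} (hsm : s ≤ m) (hm : P m) :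
    ∃ i, s ≤ i ∧ i ≤ m ∧ P i ∧ ∀ k, s ≤ k → k < i → ¬P k := by
  obtain ⟨i, ⟨hsi, hi⟩, hmin⟩ :=
    Int.exists_least_of_bdd (P := fun i => s ≤ i ∧ P i) ⟨s, fun _ hz => hz.1⟩ ⟨m, hsm, hm⟩
  exact ⟨i, hsi, hmin m ⟨hsm, hm⟩, hi, fun k hk hki hP => by have := hmin k ⟨hk, hP⟩; omega⟩

theorem exists_last_int {P : ℤ → Prop} {m t : ℤ} (hmt : m ≤ t) (hm : P m) :
    ∃ j, m ≤ j ∧ j ≤ t ∧ P j ∧ ∀ k, j < k → k ≤ t → ¬P k := by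
  obtain ⟨j, ⟨hjt, hj⟩, hmax⟩ :=
    Int.exists_greatest_of_bdd (P := fun i => i ≤ t ∧ P i) ⟨t, fun _ hz => hz.1⟩ ⟨m, hmt, hm⟩
  exact ⟨j, hmax m ⟨hmt, hm⟩, hjt, hj, fun k hjk hk hP => by have := hmax k ⟨hk, hP⟩; omega⟩

end Holes

section Attachments

variable {α : Type} {G : SimpleGraph α} {n : ℕ} {h : ℤ → α} {C S : Set α} {x v : α}

/-- A chordless path with vertex set `S` from a vertex `x` of the hole `C` to a vertex `v` off `C`
whose internal vertices avoid `C` and have no neighbour on `C` other than `x`. -/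
structure IsTail (G : SimpleGraph α) (C : Set α) (x v : α) (S : Set α) : Prop where
  path : InducedPathOn G x v S
  notMem : v ∉ C
  anticomplete : ∀ y ∈ S, y ≠ x → y ≠ v → ∀ z ∈ C, z ≠ x → y ≠ z ∧ ¬G.Adj y z

theorem IsTail.of_adj (hxv : G.Adj x v) (hv : v ∉ C) : IsTail G C x v {x, v} where
  path := (InducedPathOn.singleton G v).cons hxv (by simpa using hxv.ne)
    (by rintro y rfl -; rfl)
  notMem := hv
  anticomplete y hy hyx hyv := by
    rcases hy with rfl | rfl
    · exact absurd rfl hyx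
    · exact absurd rfl hyv

theorem IsTail.ne_and_eq_of_adj (T : IsTail G C x v S) {y z : α} (hz : z ∈ C) (hzx : z ≠ x)
    (hy : y ∈ S) (hyx : y ≠ x) : z ≠ y ∧ (G.Adj z y → y = v) := by
  by_cases hyv : y = v
  · exact ⟨fun hzy => T.notMem (hyv ▸ hzy ▸ hz), fun _ => hyv⟩
  · have hanti := T.anticomplete y hy hyx hyv z hz hzx
    exact ⟨hanti.1.symm, fun hadj => absurd hadj.symm hanti.2⟩

namespace IsHoleSeq

theorem inducedPathOn_arc_to_period (H : IsHoleSeq G n h) {i : ℤ} (hi : 2 ≤ i) (hin : i ≤ n) :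
    InducedPathOn G (h 0) (h i) (h '' Set.Icc i n) := by
  have harc := (H.inducedPathOn_arc hin (by omega)).symm
  rwa [show h n = h 0 by simpa using H.periodic 0] at harc

theorem ne_of_lt (H : IsHoleSeq G n h) {i j : ℤ} (hij : i < j) (hji : j < i + n) : h i ≠ h j :=
  fun heq => hij.ne (H.inj i j (by omega) hji heq)

/-- The two arcs of the hole and the tail form a theta with ends `h 0` and `h i`. -/
theorem containsTheta_of_unique_adj (H : IsHoleSeq G n h) (T : IsTail G (Set.range h) (h 0) v S)
    {i : ℤ} (hi : 2 ≤ i) (hin : i + 2 ≤ n) (hvi : G.Adj v (h i))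
    (hv : ∀ k : ℤ, 0 < k → k < n → G.Adj v (h k) → k = i) : ContainsTheta G := by
  have hn0 : h n = h 0 := by simpa using H.periodic 0
  have hne : h 0 ≠ h i := H.ne_of_lt (by omega) (by omega)
  have h0i : ¬G.Adj (h 0) (h i) := H.not_adj_of_add_two_le (by omega) (by omega)
  have htail (k : ℤ) (hk : 0 < k) (hkn : k < n) (hki : k ≠ i) (y : α)
      (hy : y ∈ insert (h i) S) (hy0 : y ≠ h 0) (hyi : y ≠ h i) : h k ≠ y ∧ ¬G.Adj (h k) y := by
    have hsep := T.ne_and_eq_of_adj ⟨k, rfl⟩ (H.ne_of_lt hk (by omega)).symm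
      (hy.resolve_left hyi) hy0
    refine ⟨hsep.1, fun hadj => hki (hv k hk hkn ?_)⟩
    rw [← hsep.2 hadj]
    exact hadj.symm
  refine containsTheta_of_inducedPathOn hne h0i (H.inducedPathOn_arc (by omega) (by omega))
    (H.inducedPathOn_arc_to_period hi (by omega)) (T.path.concat hvi.symm ?_ ?_) ?_ ?_ ?_
  · exact fun hiS => (T.ne_and_eq_of_adj ⟨i, rfl⟩ hne.symm hiS hne.symm).1 rfl
  · rintro y hy hadj
    have hy0 : y ≠ h 0 := by rintro rfl; exact h0i hadj.symm
    exact (T.ne_and_eq_of_adj ⟨i, rfl⟩ hne.symm hy hy0).2 hadj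
  · rintro _ ⟨k, ⟨hk0, hki⟩, rfl⟩ _ ⟨l, ⟨hil, hln⟩, rfl⟩ hk hk' hl hl'
    have : 0 < k ∧ k < i ∧ i < l ∧ l < n := by grind
    exact ⟨H.ne_of_lt (by omega) (by omega), H.not_adj_of_add_two_le (by omega) (by omega)⟩
  · rintro _ ⟨k, ⟨hk0, hki⟩, rfl⟩ y hy hk hk' hy0 hyi
    exact htail k (by grind) (by omega) (by grind) y hy hy0 hyi
  · rintro _ ⟨k, ⟨hik, hkn⟩, rfl⟩ y hy hk hk' hy0 hyi
    exact htail k (by omega) (by grind) (by grind) y hy hy0 hyi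

/-- The two arcs of the hole and the tail form a pyramid with apex `h 0`. -/
theorem containsPyramid_of_consecutive_adj (H : IsHoleSeq G n h)
    (T : IsTail G (Set.range h) (h 0) v S) {i : ℤ} (hi : 0 < i) (hin : i + 1 < n)
    (hvi : G.Adj v (h i)) (hvi' : G.Adj v (h (i + 1)))
    (hv : ∀ k : ℤ, 0 < k → k < n → G.Adj v (h k) → k = i ∨ k = i + 1)
    (hlong : ¬G.Adj v (h 0) ∨ (2 ≤ i ∧ i + 3 ≤ n)) : ContainsPyramid G := by
  have hn0 : h n = h 0 := by simpa using H.periodic 0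
  have hn := H.four_le
  have hleft : 2 ≤ i → ¬G.Adj (h 0) (h i) := fun _ =>
    H.not_adj_of_add_two_le (by omega) (by omega)
  have hright : i + 3 ≤ n → ¬G.Adj (h 0) (h (i + 1)) := fun _ =>
    H.not_adj_of_add_two_le (by omega) (by omega)
  have htail (k : ℤ) (hk : 0 < k) (hkn : k < n) (y : α) (hy : y ∈ S) (hy0 : y ≠ h 0) :
      h k ≠ y ∧ (G.Adj (h k) y → (k = i ∨ k = i + 1) ∧ y = v) := by
    have hsep := T.ne_and_eq_of_adj ⟨k, rfl⟩ (H.ne_of_lt hk (by omega)).symm hy hy0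
    refine ⟨hsep.1, fun hadj => ⟨hv k hk hkn ?_, hsep.2 hadj⟩⟩
    rw [← hsep.2 hadj]
    exact hadj.symm
  refine containsPyramid_of_inducedPathOn (H.inducedPathOn_arc (by omega) (by omega))
    (H.inducedPathOn_arc_to_period (by omega) (by omega)) T.path
    (H.ne_of_lt (by omega) (by omega)) (H.ne_of_lt (by omega) (by omega))
    (fun heq => T.notMem ⟨0, heq⟩) ?_ (H.adj_succ i) hvi'.symm hvi.symm ?_ ?_ ?_
  · rw [G.adj_comm v] at hlong
    by_cases h2 : 2 ≤ i
    · by_cases h3 : i + 3 ≤ n <;> tauto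
    · exact .inr (.inr ⟨hright (by omega), by tauto⟩)
  · rintro _ ⟨k, ⟨hk0, hki⟩, rfl⟩ _ ⟨l, ⟨hil, hln⟩, rfl⟩ hk hl
    have : 0 < k ∧ l < n := by grind
    refine ⟨H.ne_of_lt (by omega) (by omega), fun hadj => ?_⟩
    rw [H.adj_iff _ _ (by omega) (by omega)] at hadj
    exact ⟨by congr; omega, by congr; omega⟩
  · rintro _ ⟨k, ⟨hk0, hki⟩, rfl⟩ y hy hk hy0
    grind
  · rintro _ ⟨k, ⟨hik, hkn⟩, rfl⟩ y hy hk hy0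
    grind

/-- The two arcs of the hole running from `h 0` to the first and to the last neighbour of `v`
form a theta with the tail. -/
theorem containsTheta_of_spread_adj (H : IsHoleSeq G n h) (T : IsTail G (Set.range h) (h 0) v S)
    (hv0 : ¬G.Adj v (h 0)) {i j : ℤ} (hi : 0 < i) (hij : i + 2 ≤ j) (hjn : j < n)
    (hvi : G.Adj v (h i)) (hvj : G.Adj v (h j))
    (hv : ∀ k : ℤ, 0 < k → k < n → G.Adj v (h k) → i ≤ k ∧ k ≤ j) : ContainsTheta G := by
  have hn0 : h n = h 0 := by simpa using H.periodic 0
  have hmem (k : ℤ) : h k ≠ v := fun hk => T.notMem ⟨k, hk⟩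
  have hnotMem (A : Set ℤ) : v ∉ h '' A := by
    rintro ⟨k, -, hk⟩
    exact hmem k hk
  have htail (k : ℤ) (hk : 0 < k) (hkn : k < n) (y : α) (hy : y ∈ S) (hy0 : y ≠ h 0)
      (hyv : y ≠ v) : h k ≠ y ∧ ¬G.Adj (h k) y := by
    have hsep := T.ne_and_eq_of_adj ⟨k, rfl⟩ (H.ne_of_lt hk (by omega)).symm hy hy0
    exact ⟨hsep.1, fun hadj => hyv (hsep.2 hadj)⟩
  have hleft := (H.inducedPathOn_arc (s := 0) (t := i) (by omega) (by omega)).concat hvi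
    (hnotMem _) (by
      rintro _ ⟨k, ⟨hk0, hki⟩, rfl⟩ hadj
      have : k ≠ 0 := by rintro rfl; exact hv0 hadj
      have := hv k (by omega) (by omega) hadj
      congr; omega)
  have hright := (H.inducedPathOn_arc_to_period (i := j) (by omega) (by omega)).concat hvj
    (hnotMem _) (by
      rintro _ ⟨k, ⟨hjk, hkn⟩, rfl⟩ hadj
      have : k ≠ n := by rintro rfl; exact hv0 (hn0 ▸ hadj)
      have := hv k (by omega) (by omega) hadj
      congr; omega)
  refine containsTheta_of_inducedPathOn (hmem 0) (fun hadj => hv0 hadj.symm) hleft hright T.path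
    ?_ ?_ ?_
  · rintro _ (rfl | ⟨k, ⟨hk0, hki⟩, rfl⟩) _ (rfl | ⟨l, ⟨hjl, hln⟩, rfl⟩) hk hk' hl hl'
    iterate 3 contradiction
    have : 0 < k ∧ l < n := by grind
    exact ⟨H.ne_of_lt (by omega) (by omega), H.not_adj_of_add_two_le (by omega) (by omega)⟩
  · rintro _ (rfl | ⟨k, ⟨hk0, hki⟩, rfl⟩) y hy hk hk' hy0 hyv
    · contradiction
    · exact htail k (by grind) (by omega) y hy hy0 hyv
  · rintro _ (rfl | ⟨k, ⟨hjk, hkn⟩, rfl⟩) y hy hk hk' hy0 hyv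
    · contradiction
    · exact htail k (by omega) (by grind) y hy hy0 hyv

end IsHoleSeq

namespace IsHole

theorem exists_neighborSet_inter_eq_singleton (hTheta : ¬ContainsTheta G)
    (hPyr : ¬ContainsPyramid G) (hC : IsHole G C) (hx : x ∈ C) (T : IsTail G C x v S)
    (hvx : ¬G.Adj v x) {w : α} (hw : w ∈ C) (hvw : G.Adj v w) :
    ∃ y, G.neighborSet v ∩ C = {y} ∧ G.Adj x y := by
  obtain ⟨n, h, H, rfl, rfl⟩ := hC.exists_isHoleSeq hx
  obtain ⟨l, rfl⟩ := hw
  obtain ⟨m, hm0, hmn, hm⟩ := H.exists_mem_window 0 l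
  rw [← hm] at hvw
  obtain ⟨i, hi0, him, hvi, hfirst⟩ := exists_first_int (P := fun k => G.Adj v (h k)) hm0 hvw
  obtain ⟨j, hmj, hjn, hvj, hlast⟩ :=
    exists_last_int (P := fun k => G.Adj v (h k)) (t := n - 1) (by omega) hvw
  have hi : i ≠ 0 := by rintro rfl; exact hvx hvi
  have hv (k : ℤ) (hk : 0 < k) (hkn : k < n) (hadj : G.Adj v (h k)) : i ≤ k ∧ k ≤ j :=
    ⟨by_contra fun hki => hfirst k (by omega) (by omega) hadj,
      by_contra fun hjk => hlast k (by omega) (by omega) hadj⟩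
  obtain hij | rfl | rfl : i + 2 ≤ j ∨ j = i + 1 ∨ j = i := by omega
  · exact (hTheta (H.containsTheta_of_spread_adj T hvx (by omega) hij (by omega) hvi hvj hv)).elim
  · refine (hPyr (H.containsPyramid_of_consecutive_adj T (by omega) (by omega) hvi hvj
      (fun k hk hkn hadj => ?_) (.inl hvx))).elim
    have := hv k hk hkn hadj
    omega
  · refine ⟨h j, ?_, ?_⟩
    · refine Set.Subset.antisymm ?_ (by simpa using hvi)
      rintro _ ⟨hadj, k, rfl⟩
      obtain ⟨k', hk0, hkn, hk'⟩ := H.exists_mem_window 0 k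
      rw [mem_neighborSet, ← hk'] at hadj
      have : k' ≠ 0 := by rintro rfl; exact hvx hadj
      have := hv k' (by omega) (by omega) hadj
      rw [← hk', Set.mem_singleton_iff, show k' = j by omega]
    · by_contra hadj
      rw [H.adj_iff _ _ (by omega) (by omega)] at hadj
      refine hTheta (H.containsTheta_of_unique_adj T (by omega) (by omega) hvi ?_)
      intro k hk hkn hadj
      have := hv k hk hkn hadj
      omega

theorem containsTheta_of_pair (hC : IsHole G C) (hv : v ∉ C) {y z : α}
    (hN : G.neighborSet v ∩ C = {y, z}) (hne : y ≠ z) (hyz : ¬G.Adj y z) : ContainsTheta G := by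
  obtain ⟨hvy, hy⟩ : y ∈ G.neighborSet v ∩ C := hN ▸ .inl rfl
  obtain ⟨hvz, hz⟩ : z ∈ G.neighborSet v ∩ C := hN ▸ .inr rfl
  obtain ⟨n, h, H, rfl, rfl⟩ := hC.exists_isHoleSeq hy
  obtain ⟨l, rfl⟩ := hz
  obtain ⟨i, hi0, hin, hi⟩ := H.exists_mem_window 0 l
  rw [← hi] at hN hne hyz hvz
  have : i ≠ 0 := by rintro rfl; exact hne rfl
  rw [H.adj_iff _ _ (by omega) (by omega)] at hyz
  refine H.containsTheta_of_unique_adj (.of_adj (G.adj_symm hvy) hv) (by omega) (by omega) hvz ?_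
  intro k hk hkn hadj
  obtain hk' | hk' : h k ∈ ({h 0, h i} : Set α) := hN ▸ ⟨hadj, k, rfl⟩
  · exact absurd hk'.symm (H.ne_of_lt hk (by omega))
  · exact H.inj _ _ (by omega) (by omega) hk'

theorem containsPyramid_of_triple (hC : IsHole G C) (hv : v ∉ C) {y z : α}
    (hN : G.neighborSet v ∩ C = {x, y, z}) (hyz : G.Adj y z) (hxy : x ≠ y) (hxz : x ≠ z)
    (hxy' : ¬G.Adj x y) (hxz' : ¬G.Adj x z) : ContainsPyramid G := by
  have hmem (w : α) (hw : w ∈ ({x, y, z} : Set α)) : w ∈ G.neighborSet v ∩ C := hN ▸ hw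
  obtain ⟨hvx, hx⟩ := hmem x (by simp)
  obtain ⟨hvy, hy⟩ := hmem y (by simp)
  obtain ⟨hvz, hz⟩ := hmem z (by simp)
  clear hmem
  obtain ⟨n, h, H, rfl, rfl⟩ := hC.exists_isHoleSeq hx
  rw [← H.image_Ico_eq_range 0] at hy hz
  obtain ⟨i, ⟨hi0, hin⟩, rfl⟩ := hy
  obtain ⟨j, ⟨hj0, hjn⟩, rfl⟩ := hz
  wlog hij : i < j generalizing i j
  · have hji : j < i := lt_of_le_of_ne (by omega) (by rintro rfl; exact hyz.ne rfl)
    exact this j hj0 hjn hvz hxz hxz' i hi0 hin hvy hxy hxy' hyz.symm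
      (by rw [hN, Set.pair_comm]) hji
  have : i ≠ 0 := by rintro rfl; exact hxy rfl
  rw [H.adj_iff _ _ (by omega) (by omega)] at hyz hxy' hxz'
  obtain rfl : j = i + 1 := by omega
  refine H.containsPyramid_of_consecutive_adj (.of_adj (G.adj_symm hvx) hv) (by omega) (by omega)
    hvy hvz (fun k hk hkn hadj => ?_) (.inr ⟨by omega, by omega⟩)
  obtain hk' | hk' | hk' : h k ∈ ({h 0, h i, h (i + 1)} : Set α) := hN ▸ ⟨hadj, k, rfl⟩
  · exact absurd hk'.symm (H.ne_of_lt hk (by omega))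
  · exact .inl (H.inj _ _ (by omega) (by omega) hk')
  · exact .inr (H.inj _ _ (by omega) (by omega) hk')

end IsHole

end Attachments

section Twins

variable {α : Type} {G : SimpleGraph α} {n : ℕ} {h : ℤ → α} {C : Set α} {v : α} {c e : ℤ}

/-- The neighbours of `v` on the rim `h` are exactly `h c` and the two rim neighbours of `h c`. -/
def IsTwinAt (G : SimpleGraph α) (h : ℤ → α) (v : α) (c : ℤ) : Prop :=
  ∀ i, G.Adj v (h i) ↔ h i = h (c - 1) ∨ h i = h c ∨ h i = h (c + 1)

namespace IsHoleSeq

theorem eq_or_eq_of_adj (H : IsHoleSeq G n h) {y : α} (hy : y ∈ Set.range h)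
    (hadj : G.Adj (h c) y) : y = h (c - 1) ∨ y = h (c + 1) := by
  obtain ⟨i, rfl⟩ := hy
  obtain ⟨k, hck, hkc, hk⟩ := H.exists_mem_window c i
  rw [← hk] at hadj ⊢
  have : k ≠ c := by rintro rfl; exact hadj.ne rfl
  rw [H.adj_iff _ _ (by omega) (by omega)] at hadj
  rcases hadj with rfl | hadj
  · exact .inr rfl
  · rw [← H.periodic (c - 1), show c - 1 + n = k by omega]
    exact .inl rfl

theorem exists_isTwinAt_of_path (H : IsHoleSeq G n h) {p w q : α}
    (hN : G.neighborSet v ∩ Set.range h = {p, w, q}) (hpq : p ≠ q) (hwp : G.Adj w p)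
    (hwq : G.Adj w q) (hve : G.Adj v (h e)) : ∃ c, e - 1 ≤ c ∧ c ≤ e + 1 ∧ IsTwinAt G h v c := by
  have hmem (y : α) (hy : y ∈ ({p, w, q} : Set α)) : y ∈ Set.range h := (hN ▸ hy :).2
  obtain ⟨i, rfl⟩ := hmem w (by simp)
  obtain ⟨c, hec, hce, hc⟩ := H.exists_mem_window (e - 1) i
  rw [← hc] at hN hwp hwq
  have htwin : IsTwinAt G h v c := by
    intro k
    have hk : G.Adj v (h k) ↔ h k ∈ ({p, h c, q} : Set α) := by simp [← hN]
    rw [hk]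
    have := H.eq_or_eq_of_adj (hmem p (by simp)) hwp
    have := H.eq_or_eq_of_adj (hmem q (by simp)) hwq
    grind
  have hn := H.four_le
  refine ⟨c, by omega, ?_, htwin⟩
  rcases (htwin e).1 hve with heq | heq | heq
  all_goals
    have := H.inj _ _ (by omega) (by omega) heq
    omega

theorem exists_isTwinAt_of_triple (hPyr : ¬ContainsPyramid G) (H : IsHoleSeq G n h)
    (hv : v ∉ Set.range h) {x y z : α} (hN : G.neighborSet v ∩ Set.range h = {x, y, z})
    (hyz : G.Adj y z) (hxy : x ≠ y) (hxz : x ≠ z) (hve : G.Adj v (h e)) :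
    ∃ c, e - 1 ≤ c ∧ c ≤ e + 1 ∧ IsTwinAt G h v c := by
  by_cases hxy' : G.Adj x y
  · exact H.exists_isTwinAt_of_path hN hxz hxy'.symm hyz hve
  by_cases hxz' : G.Adj x z
  · exact H.exists_isTwinAt_of_path (by rw [hN, Set.pair_comm]) hxy hxz'.symm hyz.symm hve
  · exact (hPyr (H.isHole_range.containsPyramid_of_triple hv hN hyz hxy hxz hxy' hxz')).elim

end IsHoleSeq

theorem IsHole.exists_adj_neighborSet_inter_eq_pair (hTheta : ¬ContainsTheta G)
    (hEW : ¬ContainsEvenWheel G) (hC : IsHole G C) (hv : v ∉ C)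
    (htwo : 2 ≤ (G.neighborSet v ∩ C).ncard) (heven : Even (G.neighborSet v ∩ C).ncard) :
    ∃ y z, G.Adj y z ∧ G.neighborSet v ∩ C = {y, z} := by
  have hcard : (G.neighborSet v ∩ C).ncard = 2 :=
    htwo.antisymm' <| not_lt.1 fun hthree => hEW (hC.containsEvenWheel hv hthree heven)
  obtain ⟨y, z, hne, hN⟩ := Set.ncard_eq_two.1 hcard
  exact ⟨y, z, by_contra fun hyz => hTheta (hC.containsTheta_of_pair hv hN hne hyz), hN⟩

/-- Removing one rim neighbour from the odd wheel `(h, v)` leaves an even number of them on `C`,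
and since `C` and `v` do not form an even wheel, this number is two. -/
theorem IsHoleSeq.exists_isTwinAt_of_neighborSet_diff (hTheta : ¬ContainsTheta G)
    (hPyr : ¬ContainsPyramid G) (hEW : ¬ContainsEvenWheel G) (H : IsHoleSeq G n h)
    (hv : v ∉ Set.range h) (hthree : 3 ≤ (G.neighborSet v ∩ Set.range h).ncard)
    (hC : IsHole G C) (hvC : v ∉ C) (hve : G.Adj v (h e))
    (hdiff : G.neighborSet v ∩ C = (G.neighborSet v ∩ Set.range h) \ {h e}) :
    ∃ c, e - 1 ≤ c ∧ c ≤ e + 1 ∧ IsTwinAt G h v c := by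
  have hmem : h e ∈ G.neighborSet v ∩ Set.range h := ⟨hve, e, rfl⟩
  have hodd : ¬Even (G.neighborSet v ∩ Set.range h).ncard := fun heven =>
    hEW (H.isHole_range.containsEvenWheel hv hthree heven)
  have hcard := Set.ncard_sdiff_singleton_of_mem hmem
  rw [← hdiff] at hcard
  obtain ⟨y, z, hyz, hN⟩ := hC.exists_adj_neighborSet_inter_eq_pair hTheta hEW hvC (by omega)
    (by rw [hcard]; exact Nat.Odd.sub_odd (Nat.not_even_iff_odd.1 hodd) odd_one)
  have hyz' : h e ∉ ({y, z} : Set α) := by rw [← hN, hdiff]; simp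
  refine H.exists_isTwinAt_of_triple hPyr hv (x := h e) (y := y) (z := z) ?_ hyz
    (fun heq => hyz' (.inl heq)) (fun heq => hyz' (.inr heq)) hve
  rw [← hN, hdiff, Set.insert_sdiff_singleton, Set.insert_eq_of_mem hmem]

end Twins

section TwoCenters

variable {α : Type} {G : SimpleGraph α} {n : ℕ} {h : ℤ → α} {u v : α} {s t m c e : ℤ}

/-- A 2-wheel with rim `h` and non-adjacent centers `u` and `v`. -/
structure IsTwoWheel (G : SimpleGraph α) (n : ℕ) (h : ℤ → α) (u v : α) : Prop
    extends IsHoleSeq G n h where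
  ne : u ≠ v
  not_adj : ¬G.Adj u v
  left_notMem : u ∉ Set.range h
  right_notMem : v ∉ Set.range h
  three_le_left : 3 ≤ (G.neighborSet u ∩ Set.range h).ncard
  three_le_right : 3 ≤ (G.neighborSet v ∩ Set.range h).ncard

/-- The neighbours of `u` lie on one and those of `v` on the other of the two arcs into which
`h s` and `h t` cut the rim; this is `NestedCfg` for a rim indexed by `ℤ`. -/
def IsNestedSeq (G : SimpleGraph α) (n : ℕ) (h : ℤ → α) (u v : α) : Prop :=
  ∃ s t : ℤ, s < t ∧ t < s + n ∧ (∀ i, s < i → i < t → ¬G.Adj u (h i)) ∧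
    ∀ i, t < i → i < s + n → ¬G.Adj v (h i)

/-- `CousinCfg` for a rim indexed by `ℤ`. -/
def IsCousinSeq (G : SimpleGraph α) (h : ℤ → α) (u v : α) : Prop :=
  ∃ c : ℤ, (IsTwinAt G h u c ∧ IsTwinAt G h v (c + 1)) ∨
    (IsTwinAt G h v c ∧ IsTwinAt G h u (c + 1))

theorem IsCousinSeq.symm (hc : IsCousinSeq G h u v) : IsCousinSeq G h v u := by
  obtain ⟨c, hc⟩ := hc
  exact ⟨c, hc.symm⟩

namespace IsTwoWheel

theorem symm (W : IsTwoWheel G n h u v) : IsTwoWheel G n h v u where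
  toIsHoleSeq := W.toIsHoleSeq
  ne := W.ne.symm
  not_adj hadj := W.not_adj hadj.symm
  left_notMem := W.right_notMem
  right_notMem := W.left_notMem
  three_le_left := W.three_le_right
  three_le_right := W.three_le_left

theorem reflect (W : IsTwoWheel G n h u v) : IsTwoWheel G n (fun i => h (-i)) u v := by
  have hrange : Set.range (fun i => h (-i)) = Set.range h := neg_surjective.range_comp h
  exact
    { toIsHoleSeq := W.toIsHoleSeq.reflect
      ne := W.ne
      not_adj := W.not_adj
      left_notMem := hrange ▸ W.left_notMem
      right_notMem := hrange ▸ W.right_notMem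
      three_le_left := hrange ▸ W.three_le_left
      three_le_right := hrange ▸ W.three_le_right }

end IsTwoWheel

theorem IsNestedSeq.symm (W : IsTwoWheel G n h u v) (hN : IsNestedSeq G n h u v) :
    IsNestedSeq G n h v u := by
  obtain ⟨s, t, hst, hts, hu, hv⟩ := hN
  refine ⟨t, s + n, hts, by omega, hv, fun i hi hi' => ?_⟩
  rw [← sub_add_cancel i n, W.periodic]
  exact hu _ (by omega) (by omega)

theorem IsHoleSeq.exists_inducedPathOn_through_arc_of_le (H : IsHoleSeq G n h) {a b : ℤ}
    (hu : u ∉ Set.range h) (hv : v ∉ Set.range h) (hne : u ≠ v) (huv : ¬G.Adj u v) (hab : a ≤ b)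
    (hba : b + 2 ≤ a + n) (hua : G.Adj u (h a)) (hvb : G.Adj v (h b)) :
    ∃ S, InducedPathOn G u v S ∧ ∀ y ∈ S, y = u ∨ y = v ∨ y ∈ h '' Set.Icc a b := by
  obtain ⟨a', haa', ha'b, hua', hlast⟩ :=
    exists_last_int (P := fun k => G.Adj u (h k)) hab hua
  obtain ⟨b', ha'b', hb'b, hvb', hfirst⟩ :=
    exists_first_int (P := fun k => G.Adj v (h k)) ha'b hvb
  have hpath := (H.inducedPathOn_arc ha'b' (by omega)).concat hvb'
    (fun hmem => hv (Set.image_subset_range _ _ hmem)) (by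
      rintro _ ⟨k, ⟨hk, hk'⟩, rfl⟩ hadj
      congr; grind)
  refine ⟨_, hpath.cons hua' ?_ ?_, ?_⟩
  · rintro (heq | hmem)
    · exact hne heq
    · exact hu (Set.image_subset_range _ _ hmem)
  · rintro _ (rfl | ⟨k, ⟨hk, hk'⟩, rfl⟩) hadj
    · exact absurd hadj huv
    · have := hlast k
      congr; grind
  · rintro y (rfl | rfl | ⟨k, ⟨hk, hk'⟩, rfl⟩)
    · exact .inl rfl
    · exact .inr (.inl rfl)
    · exact .inr (.inr ⟨k, ⟨by omega, by omega⟩, rfl⟩)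

theorem IsTwoWheel.exists_inducedPathOn_through_arc (W : IsTwoWheel G n h u v) {l r a b : ℤ}
    (hrl : r + 2 ≤ l + n) (hla : l ≤ a) (har : a ≤ r) (hlb : l ≤ b) (hbr : b ≤ r)
    (hua : G.Adj u (h a)) (hvb : G.Adj v (h b)) :
    ∃ S, InducedPathOn G u v S ∧ ∀ y ∈ S, y ≠ u → y ≠ v → y ∈ h '' Set.Icc l r := by
  rcases le_total a b with hab | hba
  · obtain ⟨S, hS, hsub⟩ := W.exists_inducedPathOn_through_arc_of_le W.left_notMem W.right_notMem
      W.ne W.not_adj hab (by omega) hua hvb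
    refine ⟨S, hS, fun y hy hyu hyv => ?_⟩
    exact Set.image_mono (Set.Icc_subset_Icc hla hbr)
      (((hsub y hy).resolve_left hyu).resolve_left hyv)
  · obtain ⟨S, hS, hsub⟩ := W.exists_inducedPathOn_through_arc_of_le W.right_notMem W.left_notMem
      W.ne.symm W.symm.not_adj hba (by omega) hvb hua
    refine ⟨S, hS.symm, fun y hy hyu hyv => ?_⟩
    exact Set.image_mono (Set.Icc_subset_Icc hlb har)
      (((hsub y hy).resolve_left hyv).resolve_left hyu)

/-- A sector of `u` with a neighbour of `v` strictly inside, in a 2-wheel with centers `u`, `v`. -/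
structure IsSplitSector (G : SimpleGraph α) (n : ℕ) (h : ℤ → α) (u v : α) (s t m : ℤ) : Prop
    extends IsTwoWheel G n h u v, IsLongSector G n h u s t where
  left_lt : s < m
  lt_right : m < t
  adj_mid : G.Adj v (h m)

theorem IsTwoWheel.exists_isSplitSector (W : IsTwoWheel G n h u v) (hvm : G.Adj v (h m))
    (hum : ¬G.Adj u (h m)) : ∃ s t, IsSplitSector G n h u v s t m := by
  have hperiodic (i : ℤ) : h (i - n) = h i := by rw [← W.periodic (i - n), sub_add_cancel]
  obtain ⟨_, huw, l, rfl⟩ := Set.nonempty_of_ncard_ne_zero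
    (show (G.neighborSet u ∩ Set.range h).ncard ≠ 0 by have := W.three_le_left; omega)
  obtain ⟨k, hmk, hkm, hk⟩ := W.exists_mem_window m l
  rw [mem_neighborSet, ← hk] at huw
  obtain ⟨t, hmt, htk, hut, hfirst⟩ := exists_first_int (P := fun i => G.Adj u (h i)) hmk huw
  obtain ⟨s, hks, hsm, hus, hlast⟩ := exists_last_int (P := fun i => G.Adj u (h i))
    (m := k - n) (t := m) (by omega) (by rwa [hperiodic])
  have hinner (i : ℤ) (hsi : s < i) (hit : i < t) : ¬G.Adj u (h i) := by
    rcases le_total i m with him | hmi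
    · exact hlast i hsi him
    · exact hfirst i hmi hit
  have hm : m ≠ s ∧ m ≠ t := ⟨by rintro rfl; exact hum hus, by rintro rfl; exact hum hut⟩
  have hts : t + 2 ≤ s + n := by
    by_contra hts
    have hsub : G.neighborSet u ∩ Set.range h ⊆ {h s, h t} := by
      rintro _ ⟨hui, i, rfl⟩
      obtain ⟨j, hsj, hjs, hj⟩ := W.exists_mem_window s i
      rw [mem_neighborSet, ← hj] at hui
      rw [← hj]
      grind
    have := (Set.ncard_le_ncard hsub).trans (Set.ncard_insert_le _ _)
    rw [Set.ncard_singleton] at this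
    have := W.three_le_left
    omega
  have U : IsLongSector G n h u s t := ⟨W.left_notMem, by omega, hts, hus, hut, hinner⟩
  exact ⟨s, t, { W, U with left_lt := by omega, lt_right := by omega, adj_mid := hvm }⟩

theorem IsTwoWheel.right_notMem_insert (W : IsTwoWheel G n h u v) (A : Set ℤ) :
    v ∉ insert u (h '' A) := by
  rintro (hvu | hmem)
  · exact W.ne hvu.symm
  · exact W.right_notMem (Set.image_subset_range _ _ hmem)

theorem IsTwoWheel.exists_isTwinAt_of_unique_outside (hTheta : ¬ContainsTheta G)
    (hPyr : ¬ContainsPyramid G) (hEW : ¬ContainsEvenWheel G) (W : IsTwoWheel G n h u v)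
    (U : IsLongSector G n h u s t) (hte : t < e) (hes : e < s + n) (hve : G.Adj v (h e))
    (hunique : ∀ i, t < i → i < s + n → G.Adj v (h i) → i = e) :
    ∃ c, e - 1 ≤ c ∧ c ≤ e + 1 ∧ IsTwinAt G h v c := by
  refine W.exists_isTwinAt_of_neighborSet_diff hTheta hPyr hEW W.right_notMem W.three_le_right
    (U.isHole W.toIsHoleSeq) (W.right_notMem_insert _) hve ?_
  ext y
  constructor
  · rintro ⟨hvy, rfl | ⟨k, ⟨hsk, hkt⟩, rfl⟩⟩
    · exact absurd (G.adj_symm hvy) W.not_adj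
    · exact ⟨⟨hvy, k, rfl⟩, W.ne_of_lt (by omega) (by omega)⟩
  · rintro ⟨⟨hvy, i, rfl⟩, hie⟩
    obtain ⟨j, hsj, hjs, hj⟩ := W.exists_mem_window s i
    rw [← hj] at hvy hie ⊢
    have hjt : j ≤ t := by
      by_contra hjt
      exact hie (by rw [hunique j (by omega) hjs hvy]; rfl)
    exact ⟨hvy, .inr ⟨j, ⟨hsj, hjt⟩, rfl⟩⟩

namespace IsSplitSector

theorem isHole_insert (X : IsSplitSector G n h u v s t m) :
    IsHole G (insert u (h '' Set.Icc s t)) :=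
  X.toIsLongSector.isHole X.toIsHoleSeq

theorem mid_mem (X : IsSplitSector G n h u v s t m) : h m ∈ insert u (h '' Set.Icc s t) :=
  .inr ⟨m, ⟨X.left_lt.le, X.lt_right.le⟩, rfl⟩

theorem reflect (X : IsSplitSector G n h u v s t m) :
    IsSplitSector G n (fun i => h (-i)) u v (-t) (-s) (-m) where
  toIsTwoWheel := X.toIsTwoWheel.reflect
  __ := X.toIsLongSector.reflect
  left_lt := by have := X.lt_right; omega
  lt_right := by have := X.left_lt; omega
  adj_mid := by simpa using X.adj_mid

/-- Otherwise a chordless path from `u` to `v` through the far part of the rim would be a tail of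
the hole formed by `u` and the sector, on which `v` has a neighbour not adjacent to `u`. -/
theorem not_adj_of_far (hTheta : ¬ContainsTheta G) (hPyr : ¬ContainsPyramid G)
    (X : IsSplitSector G n h u v s t m) {a b : ℤ} (hta : t + 2 ≤ a) (has : a + 2 ≤ s + n)
    (hua : G.Adj u (h a)) (htb : t + 2 ≤ b) (hbs : b + 2 ≤ s + n) : ¬G.Adj v (h b) := by
  intro hvb
  have hst := X.add_two_le
  obtain ⟨S, hS, hsub⟩ := X.exists_inducedPathOn_through_arc (l := t + 2) (r := s + n - 2)
    (by omega) hta (by omega) htb (by omega) hua hvb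
  have T : IsTail G (insert u (h '' Set.Icc s t)) u v S := by
    refine ⟨hS, X.right_notMem_insert _, ?_⟩
    rintro y hy hyu hyv _ (rfl | ⟨i, ⟨hsi, hit⟩, rfl⟩) hz
    · exact absurd rfl hz
    · obtain ⟨k, ⟨htk, hks⟩, rfl⟩ := hsub y hy hyu hyv
      exact ⟨(X.ne_of_lt (by omega) (by omega)).symm, fun hadj =>
        X.not_adj_of_add_two_le (by omega) (by omega) hadj.symm⟩
  obtain ⟨y, hN, huy⟩ := X.isHole_insert.exists_neighborSet_inter_eq_singleton hTheta hPyr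
    (Set.mem_insert _ _) T X.symm.not_adj X.mid_mem X.adj_mid
  obtain rfl : h m = y := by rw [← Set.mem_singleton_iff, ← hN]; exact ⟨X.adj_mid, X.mid_mem⟩
  exact X.not_adj_inner m X.left_lt X.lt_right huy

end IsSplitSector

/-- A split sector such that `v` is adjacent to the two rim vertices next to the sector, while `u`
has a neighbour outside the sector at distance at least two from it. -/
structure IsCrossing (G : SimpleGraph α) (n : ℕ) (h : ℤ → α) (u v : α) (s t m : ℤ) : Prop
    extends IsSplitSector G n h u v s t m where
  adj_pred : G.Adj v (h (s - 1))
  adj_succ_right : G.Adj v (h (t + 1))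
  exists_far : ∃ a, t + 2 ≤ a ∧ a + 2 ≤ s + n ∧ G.Adj u (h a)

namespace IsCrossing

theorem reflect (X : IsCrossing G n h u v s t m) :
    IsCrossing G n (fun i => h (-i)) u v (-t) (-s) (-m) where
  toIsSplitSector := X.toIsSplitSector.reflect
  adj_pred := by simpa [add_comm] using X.adj_succ_right
  adj_succ_right := by simpa [add_comm, ← sub_eq_add_neg] using X.adj_pred
  exists_far := by
    obtain ⟨a, hta, has, hua⟩ := X.exists_far
    refine ⟨n - a, by omega, by omega, ?_⟩
    rwa [← X.periodic, show -(n - a) + n = a by ring]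

theorem add_four_le (X : IsCrossing G n h u v s t m) : t + 4 ≤ s + n := by
  obtain ⟨a, hta, has, -⟩ := X.exists_far
  omega

theorem snd_adj_right_of_not_adj_succ (hTheta : ¬ContainsTheta G) (hPyr : ¬ContainsPyramid G)
    (hSq : ¬ContainsSquare G) (X : IsCrossing G n h u v s t m) (hu : ¬G.Adj u (h (t + 1))) :
    G.Adj v (h t) := by
  by_contra hvt
  have hts := X.add_four_le
  have hsm := X.left_lt
  have hmt := X.lt_right
  have hmem (i : ℤ) : h i ≠ v := fun hi => X.right_notMem ⟨i, hi⟩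
  have htt : h t ≠ h (t + 1) := X.ne_of_lt (by omega) (by omega)
  have hpath : InducedPathOn G (h t) v {h t, h (t + 1), v} :=
    ((InducedPathOn.singleton G v).cons X.adj_succ_right.symm (hmem _) (by simp)).cons
      (X.adj_succ t) (by simp [htt, hmem]) (by grind [G.adj_comm])
  have T : IsTail G (insert u (h '' Set.Icc s t)) (h t) v {h t, h (t + 1), v} := by
    refine ⟨hpath, X.right_notMem_insert _, ?_⟩
    rintro _ (rfl | rfl | rfl) hy hy'
    · contradiction
    · rintro _ (rfl | ⟨i, ⟨hsi, hit⟩, rfl⟩) hz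
      · exact ⟨fun heq => X.left_notMem ⟨_, heq⟩, fun hadj => hu hadj.symm⟩
      · have : i ≠ t := by rintro rfl; exact hz rfl
        exact ⟨(X.ne_of_lt (by omega) (by omega)).symm, fun hadj =>
          X.not_adj_of_add_two_le (by omega) (by omega) hadj.symm⟩
    · contradiction
  obtain ⟨y, hN, hty⟩ := X.isHole_insert.exists_neighborSet_inter_eq_singleton hTheta hPyr
    (.inr ⟨t, ⟨by omega, le_rfl⟩, rfl⟩) T hvt X.mid_mem X.adj_mid
  obtain rfl : h m = y := by rw [← Set.mem_singleton_iff, ← hN]; exact ⟨X.adj_mid, X.mid_mem⟩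
  exact hSq (containsSquare_of_adj (hmem t).symm (X.ne_of_lt (by omega) (by omega)) X.adj_mid
    hty.symm (X.adj_succ t) X.adj_succ_right.symm hvt
    (X.not_adj_of_add_two_le (by omega) (by omega)))

theorem exists_adj_of_adj_succ (hEW : ¬ContainsEvenWheel G) (X : IsCrossing G n h u v s t m)
    (hu : G.Adj u (h (t + 1))) : ∃ q, t + 3 ≤ q ∧ q + 1 ≤ s + n ∧ G.Adj u (h q) := by
  by_contra! hfar
  have hst := X.add_two_le
  obtain ⟨a, hta, has, hua⟩ := X.exists_far
  obtain rfl : a = t + 2 := by grind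
  refine hEW (X.isHole_range.containsEvenWheel_of_four X.left_notMem
    (a := h s) (b := h t) (c := h (t + 1)) (d := h (t + 2)) ?_ ?_ ?_ ?_ ?_ ?_ ?_)
  · refine Set.Subset.antisymm ?_ ?_
    · rintro _ ⟨hui, i, rfl⟩
      obtain ⟨j, hsj, hjs, hj⟩ := X.exists_mem_window s i
      rw [mem_neighborSet, ← hj] at hui
      have := X.not_adj_inner j
      rw [← hj]
      grind
    · have := X.adj_left
      have := X.adj_right
      simp [Set.insert_subset_iff, *]
  all_goals exact X.ne_of_lt (by omega) (by omega)

theorem snd_adj_right_of_adj_succ (hTheta : ¬ContainsTheta G) (hPyr : ¬ContainsPyramid G)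
    (hEW : ¬ContainsEvenWheel G) (X : IsCrossing G n h u v s t m) (hu : G.Adj u (h (t + 1))) :
    G.Adj v (h t) := by
  by_contra hvt
  have hsm := X.left_lt
  have hmt := X.lt_right
  obtain ⟨q, htq, hqs, huq⟩ := X.exists_adj_of_adj_succ hEW hu
  obtain ⟨j, hmj, hjt, hvj, hlast⟩ :=
    exists_last_int (P := fun k => G.Adj v (h k)) hmt.le X.adj_mid
  have hjt' : j ≠ t := by rintro rfl; exact hvt hvj
  have U : IsLongSector G n h v j (t + 1) :=
    ⟨X.right_notMem, by omega, by omega, hvj, X.adj_succ_right,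
      fun i hji hit => hlast i hji (by omega)⟩
  have hvs : G.Adj v (h (s + n - 1)) := by
    rw [show s + n - 1 = s - 1 + n by ring, X.periodic]
    exact X.adj_pred
  obtain ⟨S, hS, hsub⟩ := X.exists_inducedPathOn_through_arc (l := t + 3) (r := s + n - 1)
    (by omega) htq (by omega) (by omega) le_rfl huq hvs
  have T : IsTail G (insert v (h '' Set.Icc j (t + 1))) v u S := by
    refine ⟨hS.symm, X.symm.right_notMem_insert _, ?_⟩
    rintro y hy hyv hyu _ (rfl | ⟨i, ⟨hji, hit⟩, rfl⟩) hz
    · exact absurd rfl hz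
    · obtain ⟨k, ⟨htk, hks⟩, rfl⟩ := hsub y hy hyu hyv
      exact ⟨(X.ne_of_lt (by omega) (by omega)).symm, fun hadj =>
        X.not_adj_of_add_two_le (by omega) (by omega) hadj.symm⟩
  have hmem (i : ℤ) (hji : j ≤ i) (hit : i ≤ t + 1) : h i ∈ insert v (h '' Set.Icc j (t + 1)) :=
    .inr ⟨i, ⟨hji, hit⟩, rfl⟩
  obtain ⟨y, hN, -⟩ := (U.isHole X.toIsHoleSeq).exists_neighborSet_inter_eq_singleton hTheta hPyr
    (Set.mem_insert _ _) T X.not_adj (hmem t (by omega) (by omega)) X.adj_right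
  have ht : h t ∈ ({y} : Set α) := hN ▸ ⟨X.adj_right, hmem t (by omega) (by omega)⟩
  have ht' : h (t + 1) ∈ ({y} : Set α) := hN ▸ ⟨hu, hmem (t + 1) (by omega) le_rfl⟩
  exact X.ne_of_lt (by omega) (by omega) (ht.trans ht'.symm)

theorem snd_adj_right (hTheta : ¬ContainsTheta G) (hPyr : ¬ContainsPyramid G)
    (hEW : ¬ContainsEvenWheel G) (hSq : ¬ContainsSquare G) (X : IsCrossing G n h u v s t m) :
    G.Adj v (h t) := by
  by_cases hu : G.Adj u (h (t + 1))
  · exact X.snd_adj_right_of_adj_succ hTheta hPyr hEW hu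
  · exact X.snd_adj_right_of_not_adj_succ hTheta hPyr hSq hu

end IsCrossing

theorem not_isCrossing (hTheta : ¬ContainsTheta G) (hPyr : ¬ContainsPyramid G)
    (hEW : ¬ContainsEvenWheel G) (hSq : ¬ContainsSquare G) : ¬IsCrossing G n h u v s t m := by
  intro X
  have hst := X.add_two_le
  have hts := X.add_four_le
  have hvt := X.snd_adj_right hTheta hPyr hEW hSq
  have hvs : G.Adj v (h s) := by simpa using X.reflect.snd_adj_right hTheta hPyr hEW hSq
  exact hSq (containsSquare_of_adj X.ne (X.ne_of_lt (by omega) (by omega)).symm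
    X.adj_right hvt.symm hvs X.adj_left.symm X.not_adj
    fun hadj => X.not_adj_of_add_two_le (by omega) (by omega) hadj.symm)

theorem IsSplitSector.exists_isTwinAt_of_no_far (hPyr : ¬ContainsPyramid G)
    (hEW : ¬ContainsEvenWheel G) (X : IsSplitSector G n h u v s t m) (hts : t + 3 ≤ s + n)
    (hfar : ∀ a, t + 2 ≤ a → a + 2 ≤ s + n → ¬G.Adj u (h a)) : ∃ c, IsTwinAt G h u c := by
  have hst := X.add_two_le
  have hus := X.adj_left
  have hut := X.adj_right
  have hN (y : α) (hy : y ∈ G.neighborSet u ∩ Set.range h) :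
      y = h s ∨ y = h t ∨ y = h (t + 1) ∨ y = h (s + n - 1) := by
    obtain ⟨hui, i, rfl⟩ := hy
    obtain ⟨j, hsj, hjs, hj⟩ := X.exists_mem_window s i
    rw [mem_neighborSet, ← hj] at hui
    have := X.not_adj_inner j
    grind
  have hmem (i : ℤ) : h i ∈ G.neighborSet u ∩ Set.range h ↔ G.Adj u (h i) := by simp
  have hne {i j : ℤ} (hij : i < j) (hji : j < i + n) : h i ≠ h j := X.ne_of_lt hij hji
  by_cases hnext : G.Adj u (h (t + 1)) <;> by_cases hprev : G.Adj u (h (s + n - 1))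
  · refine (hEW (X.isHole_range.containsEvenWheel_of_four X.left_notMem (a := h s) (b := h t)
      (c := h (t + 1)) (d := h (s + n - 1)) ?_ ?_ ?_ ?_ ?_ ?_ ?_)).elim
    · ext y; grind
    all_goals exact hne (by omega) (by omega)
  · obtain ⟨c, -, -, hc⟩ := X.exists_isTwinAt_of_triple hPyr X.left_notMem (x := h s) (y := h t)
      (z := h (t + 1)) (by ext y; grind) (X.adj_succ t) (hne (by omega) (by omega))
      (hne (by omega) (by omega)) hus
    exact ⟨c, hc⟩
  · have hadj : G.Adj (h (s + n - 1)) (h s) := by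
      have := X.adj_succ (s + n - 1)
      rwa [sub_add_cancel, X.periodic] at this
    obtain ⟨c, -, -, hc⟩ := X.exists_isTwinAt_of_triple hPyr X.left_notMem (x := h t)
      (y := h (s + n - 1)) (z := h s) (by ext y; grind) hadj (hne (by omega) (by omega))
      (hne (by omega) (by omega)).symm hus
    exact ⟨c, hc⟩
  · have hsub : G.neighborSet u ∩ Set.range h ⊆ {h s, h t} := fun y hy => by grind
    have := (Set.ncard_le_ncard hsub).trans (Set.ncard_insert_le _ _)
    rw [Set.ncard_singleton] at this
    have := X.three_le_left
    omega

theorem IsSplitSector.nested_or_twin (hTheta : ¬ContainsTheta G) (hPyr : ¬ContainsPyramid G)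
    (hEW : ¬ContainsEvenWheel G) (hSq : ¬ContainsSquare G) (X : IsSplitSector G n h u v s t m) :
    IsNestedSeq G n h u v ∨ (∃ c, IsTwinAt G h u c) ∨ ∃ c, IsTwinAt G h v c := by
  have hst := X.add_two_le
  have hts := X.add_two_le_add
  by_cases hout : ∃ e, t < e ∧ e < s + n ∧ G.Adj v (h e)
  swap
  · push Not at hout
    exact .inl ⟨s, t, by omega, by omega, X.not_adj_inner, hout⟩
  obtain ⟨e, hte, hes, hve⟩ := hout
  by_cases hunique : ∀ i, t < i → i < s + n → G.Adj v (h i) → i = e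
  · obtain ⟨c, -, -, hc⟩ := X.exists_isTwinAt_of_unique_outside hTheta hPyr hEW X.toIsLongSector
      hte hes hve hunique
    exact .inr (.inr ⟨c, hc⟩)
  push Not at hunique
  obtain ⟨e', hte', hes', hve', hne⟩ := hunique
  by_cases hfar : ∃ a, t + 2 ≤ a ∧ a + 2 ≤ s + n ∧ G.Adj u (h a)
  swap
  · push Not at hfar
    exact .inr (.inl (X.exists_isTwinAt_of_no_far hPyr hEW (by omega) hfar))
  obtain ⟨a, hta, has, hua⟩ := hfar
  have hend (i : ℤ) (hti : t < i) (his : i < s + n) (hvi : G.Adj v (h i)) :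
      i = t + 1 ∨ i = s - 1 + n := by
    by_contra! hi
    exact X.not_adj_of_far hTheta hPyr hta has hua (b := i) (by omega) (by omega) hvi
  have hends := hend e hte hes hve
  have hends' := hend e' hte' hes' hve'
  have hcross : IsCrossing G n h u v s t m :=
    ⟨X, by rw [← X.periodic]; grind, by grind, a, hta, has, hua⟩
  exact (not_isCrossing hTheta hPyr hEW hSq hcross).elim

theorem IsHoleSeq.isLongSector_of_isTwinAt (H : IsHoleSeq G n h) (hu : u ∉ Set.range h)
    (htwin : IsTwinAt G h u c) : IsLongSector G n h u (c + 1 - n) (c - 1) := by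
  have hn := H.four_le
  refine ⟨hu, by omega, by omega, ?_, (htwin _).2 (.inl rfl), fun i hi hi' hadj => ?_⟩
  · rw [← H.periodic, sub_add_cancel]
    exact (htwin _).2 (.inr (.inr rfl))
  · rcases (htwin i).1 hadj with heq | heq | heq
    all_goals
      have := H.inj _ _ (by omega) (by omega) heq
      omega

theorem IsHoleSeq.not_adj_of_common_adj (H : IsHoleSeq G n h) {x y z : α} (hx : x ∈ Set.range h)
    (hy : y ∈ Set.range h) (hz : z ∈ Set.range h) (hyz : y ≠ z) (hxy : G.Adj x y)
    (hxz : G.Adj x z) : ¬G.Adj y z := by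
  obtain ⟨c, rfl⟩ := hx
  have hn := H.four_le
  have hpair : ¬G.Adj (h (c - 1)) (h (c + 1)) := H.not_adj_of_add_two_le (by omega) (by omega)
  rcases H.eq_or_eq_of_adj hy hxy with rfl | rfl <;>
    rcases H.eq_or_eq_of_adj hz hxz with rfl | rfl
  · exact absurd rfl hyz
  · exact hpair
  · exact fun hadj => hpair hadj.symm
  · exact absurd rfl hyz

namespace IsTwoWheel

theorem exists_adj_not_adj (hSq : ¬ContainsSquare G) (W : IsTwoWheel G n h u v) :
    ∃ m, G.Adj u (h m) ∧ ¬G.Adj v (h m) := by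
  by_contra! hsub
  have hclique {x y : α} (hx : x ∈ G.neighborSet u ∩ Set.range h)
      (hy : y ∈ G.neighborSet u ∩ Set.range h) (hxy : x ≠ y) : G.Adj x y := by
    obtain ⟨hux, i, rfl⟩ := hx
    obtain ⟨huy, j, rfl⟩ := hy
    by_contra hadj
    exact hSq (containsSquare_of_adj W.ne hxy hux (hsub i hux).symm (hsub j huy) (G.adj_symm huy)
      W.not_adj hadj)
  obtain ⟨x, hx, y, hy, z, hz, hxy, hxz, hyz⟩ := (Set.two_lt_ncard
    (Set.finite_of_ncard_pos (by have := W.three_le_left; omega))).1 W.three_le_left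
  exact W.not_adj_of_common_adj hx.2 hy.2 hz.2 hyz (hclique hx hy hxy) (hclique hx hz hxz)
    (hclique hy hz hyz)

theorem nested_or_cousin_of_isTwinAt (hTheta : ¬ContainsTheta G) (hPyr : ¬ContainsPyramid G)
    (hEW : ¬ContainsEvenWheel G) (hSq : ¬ContainsSquare G) (W : IsTwoWheel G n h u v)
    (htwin : IsTwinAt G h u c) : IsNestedSeq G n h u v ∨ IsCousinSeq G h u v := by
  have hn := W.four_le
  have U := W.isLongSector_of_isTwinAt W.left_notMem htwin
  by_cases hvc : G.Adj v (h c)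
  swap
  · refine .inl ⟨c + 1 - n, c - 1, by omega, by omega, U.not_adj_inner, fun i hi hi' => ?_⟩
    rwa [show i = c by omega]
  obtain ⟨c', hcc', hc'c, htwin'⟩ := W.exists_isTwinAt_of_unique_outside hTheta hPyr hEW U
    (e := c) (by omega) (by omega) hvc fun i hi hi' _ => by omega
  obtain rfl | rfl | rfl : c' = c ∨ c' = c + 1 ∨ c = c' + 1 := by omega
  · obtain ⟨m, hum, hvm⟩ := W.exists_adj_not_adj hSq
    exact absurd ((htwin' m).2 ((htwin m).1 hum)) hvm
  · exact .inr ⟨c, .inl ⟨htwin, htwin'⟩⟩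
  · exact .inr ⟨c', .inr ⟨htwin', htwin⟩⟩

theorem nested_or_cousin (hTheta : ¬ContainsTheta G) (hPyr : ¬ContainsPyramid G)
    (hEW : ¬ContainsEvenWheel G) (hSq : ¬ContainsSquare G) (W : IsTwoWheel G n h u v) :
    IsNestedSeq G n h u v ∨ IsCousinSeq G h u v := by
  obtain ⟨m, hvm, hum⟩ := W.symm.exists_adj_not_adj hSq
  obtain ⟨s, t, X⟩ := W.exists_isSplitSector hvm hum
  rcases X.nested_or_twin hTheta hPyr hEW hSq with hnested | ⟨c, htwin⟩ | ⟨c, htwin⟩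
  · exact .inl hnested
  · exact W.nested_or_cousin_of_isTwinAt hTheta hPyr hEW hSq htwin
  · exact (W.symm.nested_or_cousin_of_isTwinAt hTheta hPyr hEW hSq htwin).imp
      (IsNestedSeq.symm W.symm) IsCousinSeq.symm

end IsTwoWheel

end TwoCenters

section Translation

variable {α : Type} {G : SimpleGraph α} {n : ℕ} {f : ZMod n → α} {u v : α}

theorem Is2WheelCfg.isTwoWheel (hW : Is2WheelCfg G n f u v) (huv : ¬G.Adj u v) :
    IsTwoWheel G n (fun i => f i) u v := by
  obtain ⟨hf, hne, hu, hv, hu3, hv3⟩ := hW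
  rw [ncard_adj_comp_eq hf.2.1] at hu3 hv3
  rw [← range_comp_intCast_zmod f] at hu hv hu3 hv3
  exact ⟨hf.isHoleSeq, hne, huv, hu, hv, hu3, hv3⟩

theorem exists_intCast_zmod_eq_mem_window (hn : 0 < n) (s : ℤ) (m : ZMod n) :
    ∃ k : ℤ, s ≤ k ∧ k < s + n ∧ (k : ZMod n) = m := by
  have hper : Function.Periodic (fun i : ℤ => (i : ZMod n)) n := fun i => by simp
  obtain ⟨i, rfl⟩ := ZMod.intCast_surjective m
  obtain ⟨k, ⟨hsk, hks⟩, hk⟩ := hper.exists_mem_Ico (by exact_mod_cast hn) i s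
  exact ⟨k, hsk, hks, hk.symm⟩

theorem IsNestedSeq.nestedCfg (hN : IsNestedSeq G n (fun i => f i) u v) : NestedCfg G n f u v := by
  obtain ⟨s, t, hst, hts, hu, hv⟩ := hN
  obtain ⟨d, hd⟩ := Int.le.dest hts.le
  have hn : 0 < n := by omega
  have hs : (t : ZMod n) + d = s := by
    have := congrArg (Int.cast : ℤ → ZMod n) hd
    simpa using this
  refine ⟨t, d, by omega, by omega, fun m hm => ?_, fun m hm => ?_⟩
  · obtain ⟨k, htk, hkt, rfl⟩ := exists_intCast_zmod_eq_mem_window hn t m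
    obtain ⟨e, rfl⟩ := Int.le.dest htk
    refine ⟨e, ?_, by simp⟩
    by_contra hde
    exact hu (t + e - n) (by omega) (by omega) (by simpa using hm)
  · obtain ⟨k, hsk, hks, rfl⟩ := exists_intCast_zmod_eq_mem_window hn s m
    obtain ⟨e, rfl⟩ := Int.le.dest hsk
    refine ⟨e, ?_, by simp [hs]⟩
    by_contra hde
    exact hv (s + e) (by omega) (by omega) hm

theorem IsTwinAt.adj_iff_of_injective (hf : Function.Injective f) {c : ℤ}
    (htwin : IsTwinAt G (fun i => f i) u c) (m : ZMod n) :
    G.Adj u (f m) ↔ m = c - 1 ∨ m = c ∨ m = c + 1 := by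
  obtain ⟨i, rfl⟩ := ZMod.intCast_surjective m
  simpa [hf.eq_iff] using htwin i

theorem IsCousinSeq.cousinCfg (hf : Function.Injective f)
    (hC : IsCousinSeq G (fun i => f i) u v) : CousinCfg G n f u v := by
  have htwin_left {w : α} {c : ℤ} (hw : IsTwinAt G (fun i => f i) w c) (m : ZMod n) :
      G.Adj w (f m) ↔ m = c - 1 ∨ m = c - 1 + 1 ∨ m = c - 1 + 2 := by
    rw [hw.adj_iff_of_injective hf]
    ring_nf
  have htwin_right {w : α} {c : ℤ} (hw : IsTwinAt G (fun i => f i) w (c + 1)) (m : ZMod n) :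
      G.Adj w (f m) ↔ m = c - 1 + 1 ∨ m = c - 1 + 2 ∨ m = c - 1 + 3 := by
    rw [hw.adj_iff_of_injective hf]
    push_cast
    ring_nf
  obtain ⟨c, ⟨hu, hv⟩ | ⟨hv, hu⟩⟩ := hC
  · exact .inl ⟨c - 1, htwin_left hu, htwin_right hv⟩
  · exact .inr ⟨c - 1, htwin_left hv, htwin_right hu⟩

theorem ContainsButterfly.containsEvenWheel (hB : ContainsButterfly G) : ContainsEvenWheel G := by
  obtain ⟨n, f, u, hf, hu, i, j, hij, hij', hi'j, hi'j', -, -, hN⟩ := hB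
  have hsucc (k : ZMod n) : f k ≠ f (k + 1) := ((hf.2.2 k (k + 1)).2 (.inl rfl)).ne
  refine IsHole.containsEvenWheel_of_four ⟨n, f, hf, rfl⟩ hu (a := f i) (b := f (i + 1))
    (c := f j) (d := f (j + 1)) ?_ (hsucc i) (hf.2.1.ne hij) (hf.2.1.ne hij') (hf.2.1.ne hi'j)
    (hf.2.1.ne hi'j') (hsucc j)
  ext y
  constructor
  · rintro ⟨hadj, m, rfl⟩
    simpa [hf.2.1.eq_iff] using (hN m).1 hadj
  · rintro (rfl | rfl | rfl | rfl) <;> simp [hN]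

end Translation

theorem statement8_general {α : Type} (G : SimpleGraph α) (hTheta : ¬ContainsTheta G)
    (hPrism : ¬ContainsPrism G) (hPyr : ¬ContainsPyramid G) (hEW : ¬ContainsEvenWheel G)
    (hSq : ¬ContainsSquare G) : InClassC G := by
  refine ⟨hTheta, hPrism, hPyr, fun hB => hEW hB.containsEvenWheel, fun n f u v hW huv => ?_⟩
  exact ((hW.isTwoWheel huv).nested_or_cousin hTheta hPyr hEW hSq).imp IsNestedSeq.nestedCfg
    (IsCousinSeq.cousinCfg hW.1.2.1)

/-- Every (theta, prism, pyramid, even wheel, square)-free graph belongs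
to the class 𝒞. -/
theorem statement8 (G : SimpleGraph V)
    (hTheta : ¬ContainsTheta G) (hPrism : ¬ContainsPrism G) (hPyr : ¬ContainsPyramid G)
    (hEW : ¬ContainsEvenWheel G) (hSq : ¬ContainsSquare G) :
    InClassC G := by
  exact statement8_general G hTheta hPrism hPyr hEW hSq
end
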